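/- arXiv:cs/0408068 — 2 statements merged into one kernel-verified Lean document; each statement's English description precedes it below -/
import Mathlib

section
/- There exist a constant c > 0 and b₀ such that for all integers b ≥ b₀, all positive integers w with w < b·(log b)^{3/2}, and all points o ∈ ℝ₊² with D_δ(o) ⊆ ℝ₊² (c and b₀ independent of o): if w + b points are chosen independently and uniformly at random from D̂₁(o), with the first w colored white and the last b colored blue, then with probability at least 1 − c/(log b)^{3/2} there exist two blue points g₁, g₂ lying in D_δ(o) with d(g₁,g₂) ≤ 1 such that every one of the w + b points is within Euclidean distance 1 of g₁ or of g₂ (i.e. the two blue points form a connected dominating set of the unit disk graph on the w + b points). -/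
open MeasureTheory Real Set
open scoped ENNReal

noncomputable section

/-- The Euclidean plane ℝ². -/
abbrev Plane := EuclideanSpace ℝ (Fin 2)

/-- The point in the plane with Cartesian coordinates `(x, y)`. -/
def pt (x y : ℝ) : Plane := (WithLp.equiv 2 (Fin 2 → ℝ)).symm ![x, y]

/-- `D p r` is the closed disk of radius `r` centered at `p`. -/
def D (p : Plane) (r : ℝ) : Set Plane := Metric.closedBall p r

/-- `X o q u` is the area of `D₁(o) \ (D₁(q) ∪ D₁(u))` (Lebesgue measure). -/
def X (o q u : Plane) : ℝ := (volume (D o 1 \ (D q 1 ∪ D u 1))).toReal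

/-- The closed positive quadrant `ℝ₊²`. -/
def quad : Set Plane := {p | 0 ≤ p 0 ∧ 0 ≤ p 1}

/-- The truncated unit disk `D̂₁(o) = D₁(o) ∩ ℝ₊²`. -/
def Dhat (o : Plane) : Set Plane := D o 1 ∩ quad

/-- `δ = 1/(b^(1/3) log b)`. -/
def δ (b : ℝ) : ℝ := 1 / (b ^ (1/3 : ℝ) * Real.log b)

/-- The uniform probability measure on a set `S` (normalized restricted Lebesgue measure). -/
def unif (S : Set Plane) : Measure Plane := (volume S)⁻¹ • volume.restrict S

/-- If, once the coordinates outside `s` are frozen, every coordinate in `s` of a point of `B` is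
confined to a set of measure at most `q`, then `B` has product measure at most `q ^ s.card`. -/
lemma pi_le_pow_of_section_subset {ι α : Type*} [Fintype ι] [DecidableEq ι] [MeasurableSpace α]
    (μ : Measure α) [IsProbabilityMeasure μ] (s : Finset ι) {B : Set (ι → α)}
    (hB : MeasurableSet B) (q : ℝ≥0∞)
    (h : ∀ x ∈ B, ∃ R : Set α, μ R ≤ q ∧
      ∀ y ∈ B, (∀ i ∉ s, y i = x i) → ∀ j ∈ s, y j ∈ R) :
    (Measure.pi fun _ : ι => μ) B ≤ q ^ s.card := by
  have hm : Measurable (B.indicator (1 : (ι → α) → ℝ≥0∞)) := measurable_one.indicator hB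
  rw [← lintegral_indicator_one hB]
  refine (lintegral_le_of_lmarginal_le s hm (g := fun _ => q ^ s.card) measurable_const ?_).trans
    (by simp)
  intro x
  have hconst : (lmarginal (fun _ : ι => μ) s fun _ => q ^ s.card) x = q ^ s.card := by
    simp [lmarginal]
  rw [hconst]
  have hsub : (lmarginal (fun _ : ι => μ) s (B.indicator 1)) x
      = (Measure.pi fun _ : s => μ) {y | Function.updateFinset x s y ∈ B} := by
    have : MeasurableSet {y : s → α | Function.updateFinset x s y ∈ B} :=
      measurable_updateFinset hB
    rw [← lintegral_indicator_one this]
    rfl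
  rw [hsub]
  rcases Set.eq_empty_or_nonempty {y : s → α | Function.updateFinset x s y ∈ B} with he | ⟨y₀, hy₀⟩
  · simp [he]
  obtain ⟨R, hR, hRB⟩ := h _ hy₀
  calc (Measure.pi fun _ : s => μ) {y | Function.updateFinset x s y ∈ B}
      ≤ (Measure.pi fun _ : s => μ) (Set.univ.pi fun _ => R) := by
        refine measure_mono fun y hy j _ => ?_
        have := hRB _ hy (fun i hi => by simp [Function.updateFinset, hi]) j j.2
        simpa [Function.updateFinset] using this
    _ ≤ q ^ s.card := by
        rw [Measure.pi_pi]
        simpa using pow_le_pow_left' hR s.card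

lemma Plane.dist_le_iff (p q : Plane) {r : ℝ} (hr : 0 ≤ r) :
    dist p q ≤ r ↔ (p 0 - q 0) ^ 2 + (p 1 - q 1) ^ 2 ≤ r ^ 2 := by
  rw [EuclideanSpace.dist_eq, Real.sqrt_le_left hr]
  simp [Fin.sum_univ_two, Real.dist_eq, sq_abs]

lemma Plane.measurePreserving_coords :
    MeasurePreserving (fun z : Plane => (z 0, z 1)) volume (volume : Measure (ℝ × ℝ)) :=
  (volume_preserving_finTwoArrow ℝ).comp (PiLp.volume_preserving_ofLp (Fin 2))

lemma Plane.measurable_coord (i : Fin 2) : Measurable fun z : Plane => z i := by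
  fun_prop

/-- Area of a strip of vertical half-width `h` around the graph of `f`. -/
lemma Plane.volume_strip {f : ℝ → ℝ} (hf : Measurable f) (a a' h : ℝ) :
    volume {z : Plane | z 0 ∈ Icc a a' ∧ |z 1 - f (z 0)| ≤ h} =
      ENNReal.ofReal (a' - a) * ENNReal.ofReal (2 * h) := by
  have hS : MeasurableSet {z : ℝ × ℝ | z.1 ∈ Icc a a' ∧ |z.2 - f z.1| ≤ h} := by
    have h2 : MeasurableSet {z : ℝ × ℝ | |z.2 - f z.1| ≤ h} :=
      measurableSet_le (by fun_prop) measurable_const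
    exact (measurable_fst measurableSet_Icc).inter h2
  have := Plane.measurePreserving_coords.measure_preimage hS.nullMeasurableSet
  refine Eq.trans ?_ (this.trans ?_)
  · rfl
  rw [Measure.volume_eq_prod, Measure.prod_apply hS]
  have hslice : ∀ x : ℝ, volume (Prod.mk x ⁻¹' {z : ℝ × ℝ | z.1 ∈ Icc a a' ∧ |z.2 - f z.1| ≤ h})
      = (Icc a a').indicator (fun _ => ENNReal.ofReal (2 * h)) x := by
    intro x
    by_cases hx : x ∈ Icc a a'
    · have : Prod.mk x ⁻¹' {z : ℝ × ℝ | z.1 ∈ Icc a a' ∧ |z.2 - f z.1| ≤ h}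
          = Icc (f x - h) (f x + h) := by
        ext y
        change (x ∈ Icc a a' ∧ |y - f x| ≤ h) ↔ f x - h ≤ y ∧ y ≤ f x + h
        rw [and_iff_right hx, abs_le]
        constructor <;> rintro ⟨h1, h2⟩ <;> constructor <;> linarith
      rw [this, Real.volume_Icc, indicator_of_mem hx]
      congr 1
      ring
    · have : Prod.mk x ⁻¹' {z : ℝ × ℝ | z.1 ∈ Icc a a' ∧ |z.2 - f z.1| ≤ h} = ∅ := by
        exact eq_empty_of_forall_notMem fun y hy => hx hy.1
      rw [this, indicator_of_notMem hx, measure_empty]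
  simp_rw [hslice]
  rw [lintegral_indicator_const measurableSet_Icc, Real.volume_Icc, mul_comm]

lemma Plane.measurableSet_strip {f : ℝ → ℝ} (hf : Measurable f) (a a' h : ℝ) :
    MeasurableSet {z : Plane | z 0 ∈ Icc a a' ∧ |z 1 - f (z 0)| ≤ h} := by
  have h2 : MeasurableSet {z : Plane | |z 1 - f (z 0)| ≤ h} :=
    measurableSet_le (by fun_prop) measurable_const
  exact (Plane.measurable_coord 0 measurableSet_Icc).inter h2

/-- A planar set whose horizontal projection has diameter at most `α` and whose vertical sections
have diameter at most `β` has area at most `4 α β`. -/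
lemma Plane.volume_le_of_sections {S : Set Plane} (hS : MeasurableSet S) (α β : ℝ)
    (hx : ∀ z ∈ S, ∀ z' ∈ S, |z 0 - z' 0| ≤ α)
    (hy : ∀ z ∈ S, ∀ z' ∈ S, z 0 = z' 0 → |z 1 - z' 1| ≤ β) :
    volume S ≤ ENNReal.ofReal (2 * α) * ENNReal.ofReal (2 * β) := by
  rcases S.eq_empty_or_nonempty with rfl | ⟨z₀, hz₀⟩
  · simp
  let ψ : ℝ × ℝ → Plane := fun p => WithLp.toLp 2 ![p.1, p.2]
  have hψ : Measurable ψ := by fun_prop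
  have hS' : MeasurableSet (ψ ⁻¹' S) := hψ hS
  have hpre : S = (fun z : Plane => (z 0, z 1)) ⁻¹' (ψ ⁻¹' S) := by
    have hid : ∀ z : Plane, ψ (z 0, z 1) = z := by
      intro z
      ext i
      fin_cases i <;> rfl
    ext z
    simp only [mem_preimage, hid]
  rw [hpre, Plane.measurePreserving_coords.measure_preimage hS'.nullMeasurableSet,
    Measure.volume_eq_prod, Measure.prod_apply hS']
  have hslice : ∀ x : ℝ, volume (Prod.mk x ⁻¹' (ψ ⁻¹' S))
      ≤ (Icc (z₀ 0 - α) (z₀ 0 + α)).indicator (fun _ => ENNReal.ofReal (2 * β)) x := by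
    intro x
    rcases (Prod.mk x ⁻¹' (ψ ⁻¹' S)).eq_empty_or_nonempty with he | ⟨y, hyS⟩
    · simp [he]
    have hxI : x ∈ Icc (z₀ 0 - α) (z₀ 0 + α) := by
      have : -α ≤ x - z₀ 0 ∧ x - z₀ 0 ≤ α := abs_le.1 (hx _ hyS _ hz₀)
      constructor <;> linarith [this.1, this.2]
    rw [indicator_of_mem hxI]
    calc volume (Prod.mk x ⁻¹' (ψ ⁻¹' S)) ≤ volume (Icc (y - β) (y + β)) := by
          refine measure_mono fun y' hy' => ?_
          have : -β ≤ y' - y ∧ y' - y ≤ β := abs_le.1 (hy _ hy' _ hyS rfl)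
          constructor <;> linarith [this.1, this.2]
      _ = ENNReal.ofReal (2 * β) := by
          rw [Real.volume_Icc]
          congr 1
          ring
  refine (lintegral_mono hslice).trans ?_
  rw [lintegral_indicator_const measurableSet_Icc, Real.volume_Icc, mul_comm]
  gcongr
  linarith

lemma measurableSet_quad : MeasurableSet quad :=
  (measurableSet_le measurable_const (Plane.measurable_coord 0)).inter
    (measurableSet_le measurable_const (Plane.measurable_coord 1))

lemma measurableSet_Dhat (o : Plane) : MeasurableSet (Dhat o) :=
  Metric.isClosed_closedBall.measurableSet.inter measurableSet_quad

lemma volume_Dhat_le (o : Plane) : volume (Dhat o) ≤ 4 := by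
  have h := Plane.volume_strip (f := fun _ => o 1) measurable_const (o 0 - 1) (o 0 + 1) 1
  calc volume (Dhat o)
      ≤ volume {z : Plane | z 0 ∈ Icc (o 0 - 1) (o 0 + 1) ∧ |z 1 - o 1| ≤ 1} := by
        refine measure_mono fun z hz => ?_
        have hz1 := (Plane.dist_le_iff z o zero_le_one).1 (Metric.mem_closedBall.1 hz.1)
        refine ⟨⟨?_, ?_⟩, abs_le.2 ⟨?_, ?_⟩⟩ <;> nlinarith
    _ = 4 := by
        rw [h, ← ENNReal.ofReal_mul (by linarith)]
        norm_num [ENNReal.ofReal_ofNat]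

lemma le_volume_Dhat {o : Plane} (ho : o ∈ quad) : ENNReal.ofReal (1 / 4) ≤ volume (Dhat o) := by
  have h := Plane.volume_strip (f := fun _ => o 1 + 1 / 4) measurable_const (o 0) (o 0 + 1 / 2)
    (1 / 4)
  calc ENNReal.ofReal (1 / 4)
      = volume {z : Plane | z 0 ∈ Icc (o 0) (o 0 + 1 / 2) ∧ |z 1 - (o 1 + 1 / 4)| ≤ 1 / 4} := by
        rw [h, ← ENNReal.ofReal_mul (by linarith)]
        norm_num
    _ ≤ volume (Dhat o) := by
        refine measure_mono ?_
        rintro z ⟨⟨h1, h2⟩, h3⟩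
        obtain ⟨h3, h4⟩ := abs_le.1 h3
        obtain ⟨o1, o2⟩ := ho
        refine ⟨Metric.mem_closedBall.2 ((Plane.dist_le_iff z o zero_le_one).2 ?_), ?_, ?_⟩
        · nlinarith
        · linarith
        · linarith

lemma isProbabilityMeasure_unif {o : Plane} (ho : o ∈ quad) :
    IsProbabilityMeasure (unif (Dhat o)) := by
  refine ⟨?_⟩
  have h0 : volume (Dhat o) ≠ 0 :=
    (lt_of_lt_of_le (by simp) (le_volume_Dhat ho)).ne'
  have h1 : volume (Dhat o) ≠ ∞ := ((volume_Dhat_le o).trans_lt (by simp)).ne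
  simp [unif, ENNReal.inv_mul_cancel h0 h1]

lemma unif_le {o : Plane} (ho : o ∈ quad) {R : Set Plane} (hR : MeasurableSet R) :
    unif (Dhat o) R ≤ 4 * volume (R ∩ Dhat o) := by
  rw [unif, Measure.smul_apply, Measure.restrict_apply hR, smul_eq_mul]
  gcongr
  rw [ENNReal.inv_le_iff_inv_le]
  refine le_trans (le_of_eq ?_) (le_volume_Dhat ho)
  rw [one_div, ENNReal.ofReal_inv_of_pos (by norm_num)]
  norm_num [ENNReal.ofReal_ofNat]

lemma le_unif {o : Plane} {R : Set Plane} (hR : MeasurableSet R) (hsub : R ⊆ Dhat o) :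
    ENNReal.ofReal (1 / 4) * volume R ≤ unif (Dhat o) R := by
  rw [unif, Measure.smul_apply, Measure.restrict_apply hR, smul_eq_mul, inter_eq_left.2 hsub]
  gcongr
  rw [one_div, ENNReal.ofReal_inv_of_pos (by norm_num), ENNReal.ofReal_ofNat]
  exact ENNReal.inv_le_inv.2 (volume_Dhat_le o)

/-- `p` and `q` lie in the disk of radius `d` around `o`, on opposite sides of `o`, at comparable
distances from it, and the slopes of the lines `op` and `oq` differ by `O(d)`. -/
def NearlyAntipodal (o : Plane) (d : ℝ) (p q : Plane) : Prop :=
  p 0 - o 0 ∈ Icc (d / 4) (d / 2) ∧ |p 1 - o 1| ≤ p 0 - o 0 ∧ o 0 - q 0 ∈ Icc (d / 4) (d / 2) ∧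
    |(p 1 - o 1) * (o 0 - q 0) - (o 1 - q 1) * (p 0 - o 0)| ≤ d ^ 3 / 16 ∧
    dist p o ≤ d ∧ dist q o ≤ d

lemma measurableSet_nearlyAntipodal (o : Plane) (d : ℝ) :
    MeasurableSet {z : Plane × Plane | NearlyAntipodal o d z.1 z.2} := by
  have h1 : MeasurableSet {z : Plane × Plane | z.1 0 - o 0 ∈ Icc (d / 4) (d / 2)} := by
    have : Measurable fun z : Plane × Plane => z.1 0 - o 0 := by fun_prop
    exact this measurableSet_Icc
  have h2 : MeasurableSet {z : Plane × Plane | |z.1 1 - o 1| ≤ z.1 0 - o 0} :=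
    measurableSet_le (by fun_prop) (by fun_prop)
  have h3 : MeasurableSet {z : Plane × Plane | o 0 - z.2 0 ∈ Icc (d / 4) (d / 2)} := by
    have : Measurable fun z : Plane × Plane => o 0 - z.2 0 := by fun_prop
    exact this measurableSet_Icc
  have h4 : MeasurableSet {z : Plane × Plane |
      |(z.1 1 - o 1) * (o 0 - z.2 0) - (o 1 - z.2 1) * (z.1 0 - o 0)| ≤ d ^ 3 / 16} :=
    measurableSet_le (by fun_prop) (by fun_prop)
  have h5 : MeasurableSet {z : Plane × Plane | dist z.1 o ≤ d} :=
    measurableSet_le (by fun_prop) (by fun_prop)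
  have h6 : MeasurableSet {z : Plane × Plane | dist z.2 o ≤ d} :=
    measurableSet_le (by fun_prop) (by fun_prop)
  exact h1.inter (h2.inter (h3.inter (h4.inter (h5.inter h6))))

/-- The points of the unit disk missed by the unit disks around a nearly antipodal pair lie close
to the unit circle, in directions almost orthogonal to the pair. Here `(x, y)` is the position of
the missed point relative to `o`, the pair is `a • (1, s)` and `-a' • (1, s')`. -/
lemma bounds_of_uncovered {d a s a' s' x y : ℝ} (hd : 0 < d) (ha : a ∈ Icc (d / 4) (d / 2))
    (ha' : a' ∈ Icc (d / 4) (d / 2)) (hss : |s - s'| ≤ d)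
    (hv : a ^ 2 + (a * s) ^ 2 ≤ d ^ 2) (hv' : a' ^ 2 + (a' * s') ^ 2 ≤ d ^ 2)
    (hxy : x ^ 2 + y ^ 2 ≤ 1) (h1 : 1 < (x - a) ^ 2 + (y - a * s) ^ 2)
    (h2 : 1 < (x + a') ^ 2 + (y + a' * s') ^ 2) :
    |x + s * y| ≤ 3 * d ∧ 1 - 2 * d ^ 2 ≤ x ^ 2 + y ^ 2 := by
  obtain ⟨ha1, ha2⟩ := ha
  obtain ⟨ha1', ha2'⟩ := ha'
  have hy : |y| ≤ 1 := abs_le_one_iff_mul_self_le_one.2 (by nlinarith)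
  have hsy : |(s - s') * y| ≤ d := by
    rw [abs_mul]
    nlinarith [abs_nonneg y, abs_nonneg (s - s')]
  obtain ⟨hsy1, hsy2⟩ := abs_le.1 hsy
  have e1 : 1 - (x ^ 2 + y ^ 2) < d ^ 2 - 2 * a * (x + s * y) := by nlinarith
  have e2 : 1 - (x ^ 2 + y ^ 2) < d ^ 2 + 2 * a' * (x + s' * y) := by nlinarith
  have hL : x + s * y ≤ 2 * d := by
    by_contra! hc
    nlinarith
  have hL' : -(2 * d) ≤ x + s' * y := by
    by_contra! hc
    nlinarith
  refine ⟨abs_le.2 ⟨by linarith, by linarith⟩, ?_⟩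
  rcases le_total 0 (x + s * y) with h0 | h0
  · nlinarith
  · have : x + s' * y ≤ d := by linarith
    nlinarith

/-- The points of the upper half of a thin annulus in directions almost orthogonal to `(1, s)` are
horizontally `O(d)`-close, and vertically `O(d ^ 2)`-close along vertical lines. -/
lemma closeness_of_bounds {d s x y x' y' : ℝ} (hd : 0 < d) (hd1 : d ≤ 1 / 100) (hs : |s| ≤ 1)
    (hL : |x + s * y| ≤ 3 * d) (hlow : 1 - 2 * d ^ 2 ≤ x ^ 2 + y ^ 2) (hup : x ^ 2 + y ^ 2 ≤ 1)
    (hL' : |x' + s * y'| ≤ 3 * d) (hlow' : 1 - 2 * d ^ 2 ≤ x' ^ 2 + y' ^ 2)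
    (hup' : x' ^ 2 + y' ^ 2 ≤ 1) (hy : 0 ≤ y) (hy' : 0 ≤ y') :
    |x - x'| ≤ 20 * d ∧ (x = x' → |y - y'| ≤ 2 * d ^ 2) := by
  have key : ∀ x y : ℝ, |x + s * y| ≤ 3 * d → 1 - 2 * d ^ 2 ≤ x ^ 2 + y ^ 2 → x ^ 2 + y ^ 2 ≤ 1 →
      0 ≤ y → 1 / 2 ≤ y ∧ |(1 + s ^ 2) * y ^ 2 - 1| ≤ 7 * d := by
    intro x y hL hlow hup hy
    have hy1 : y ≤ 1 := by nlinarith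
    have hsy : |s * y| ≤ y := by
      rw [abs_mul, abs_of_nonneg hy]
      nlinarith
    obtain ⟨hL1, hL2⟩ := abs_le.1 hL
    obtain ⟨t1, t2⟩ := abs_le.1 hsy
    refine ⟨?_, ?_⟩
    · by_contra! hc
      have : x ^ 2 ≤ (y + 3 * d) ^ 2 := sq_le_sq' (by linarith) (by linarith)
      nlinarith
    · set L := x + s * y with hLdef
      have hx : x = L - s * y := by rw [hLdef]; ring
      have hLs : |L * (s * y)| ≤ 3 * d := by
        rw [abs_mul]
        nlinarith [abs_nonneg L, abs_nonneg (s * y)]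
      obtain ⟨u1, u2⟩ := abs_le.1 hLs
      have hL3 : L ^ 2 ≤ 9 * d ^ 2 := by nlinarith
      have hform : x ^ 2 + y ^ 2 = (1 + s ^ 2) * y ^ 2 - 2 * (L * (s * y)) + L ^ 2 := by
        rw [hx]; ring
      rw [hform] at hlow hup
      refine abs_le.2 ⟨?_, ?_⟩ <;> nlinarith [sq_nonneg L]
  obtain ⟨hy1, hq⟩ := key x y hL hlow hup hy
  obtain ⟨hy1', hq'⟩ := key x' y' hL' hlow' hup' hy'
  obtain ⟨q1, q2⟩ := abs_le.1 hq
  obtain ⟨q1', q2'⟩ := abs_le.1 hq'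
  have hyy : |y - y'| ≤ 14 * d := by
    have h2 : |(1 + s ^ 2) * (y ^ 2 - y' ^ 2)| ≤ 14 * d :=
      abs_le.2 ⟨by linarith, by linarith⟩
    have h3 : |(1 + s ^ 2) * (y ^ 2 - y' ^ 2)| = (1 + s ^ 2) * ((y + y') * |y - y'|) := by
      rw [abs_mul, abs_of_nonneg (by positivity), sq_sub_sq, abs_mul,
        abs_of_nonneg (by linarith : 0 ≤ y + y')]
    have h4 : |y - y'| ≤ (y + y') * |y - y'| :=
      le_mul_of_one_le_left (abs_nonneg _) (by linarith)
    nlinarith [mul_nonneg (sq_nonneg s) ((abs_nonneg (y - y')).trans h4)]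
  refine ⟨?_, ?_⟩
  · have hxx : x - x' = (x + s * y) - (x' + s * y') - s * (y - y') := by ring
    have h5 : |s * (y - y')| ≤ 14 * d := by
      rw [abs_mul]
      nlinarith [abs_nonneg (y - y')]
    obtain ⟨a1, a2⟩ := abs_le.1 hL
    obtain ⟨a3, a4⟩ := abs_le.1 hL'
    obtain ⟨a5, a6⟩ := abs_le.1 h5
    rw [hxx]
    exact abs_le.2 ⟨by linarith, by linarith⟩
  · rintro rfl
    have h2 : |y ^ 2 - y' ^ 2| ≤ 2 * d ^ 2 := abs_le.2 ⟨by linarith, by linarith⟩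
    rw [sq_sub_sq, abs_mul, abs_of_nonneg (by linarith : 0 ≤ y + y')] at h2
    exact (le_mul_of_one_le_left (abs_nonneg _) (by linarith)).trans h2

lemma measurableSet_uncovered (p q : Plane) :
    MeasurableSet {z : Plane | 1 < dist z p ∧ 1 < dist z q} := by
  have h1 : MeasurableSet {z : Plane | 1 < dist z p} :=
    measurableSet_lt measurable_const (by fun_prop)
  have h2 : MeasurableSet {z : Plane | 1 < dist z q} :=
    measurableSet_lt measurable_const (by fun_prop)
  exact h1.inter h2

/-- The unit disks around a nearly antipodal pair miss only area `O(d ^ 3)` of the unit disk. -/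
lemma volume_uncovered_le {o p q : Plane} {d : ℝ} (hd : 0 < d) (hd1 : d ≤ 1 / 100)
    (hpq : NearlyAntipodal o d p q) :
    volume ({z | 1 < dist z p ∧ 1 < dist z q} ∩ Dhat o) ≤ ENNReal.ofReal (320 * d ^ 3) := by
  obtain ⟨hp0, hp1, hq0, hcross, hp, hq⟩ := hpq
  rw [Plane.dist_le_iff _ _ hd.le] at hp hq
  set a := p 0 - o 0 with ha
  set a' := o 0 - q 0 with ha'
  have hapos : 0 < a := by linarith [hp0.1]
  have hapos' : 0 < a' := by linarith [hq0.1]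
  obtain ⟨s, hs⟩ : ∃ s, p 1 - o 1 = a * s := ⟨(p 1 - o 1) / a, by field_simp⟩
  obtain ⟨s', hs'⟩ : ∃ s', o 1 - q 1 = a' * s' := ⟨(o 1 - q 1) / a', by field_simp⟩
  have hsle : |s| ≤ 1 := by
    rw [hs, abs_mul, abs_of_pos hapos] at hp1
    nlinarith
  have hss : |s - s'| ≤ d := by
    have e : a * s * a' - a' * s' * a = a * a' * (s - s') := by ring
    rw [hs, hs', e, abs_mul, abs_of_pos (mul_pos hapos hapos')] at hcross
    have h1 : d ^ 2 / 16 ≤ a * a' := by nlinarith [hp0.1, hq0.1]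
    by_contra! hc
    nlinarith [mul_pos hapos hapos', pow_pos hd 2]
  set U := {z : Plane | 1 < dist z p ∧ 1 < dist z q} ∩ Dhat o with hU
  have hUm : MeasurableSet U := (measurableSet_uncovered p q).inter (measurableSet_Dhat o)
  have hbound : ∀ z ∈ U, (|(z 0 - o 0) + s * (z 1 - o 1)| ≤ 3 * d ∧
      1 - 2 * d ^ 2 ≤ (z 0 - o 0) ^ 2 + (z 1 - o 1) ^ 2) ∧
      (z 0 - o 0) ^ 2 + (z 1 - o 1) ^ 2 ≤ 1 := by
    rintro z ⟨⟨hz1, hz2⟩, hz, -⟩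
    have hz3 := (Plane.dist_le_iff z o zero_le_one).1 (Metric.mem_closedBall.1 hz)
    rw [← not_le, Plane.dist_le_iff _ _ zero_le_one, not_le] at hz1 hz2
    have e1 : z 0 - p 0 = (z 0 - o 0) - a := by rw [ha]; ring
    have e2 : z 1 - p 1 = (z 1 - o 1) - a * s := by rw [← hs]; ring
    have e3 : z 0 - q 0 = (z 0 - o 0) + a' := by rw [ha']; ring
    have e4 : z 1 - q 1 = (z 1 - o 1) + a' * s' := by rw [← hs']; ring
    rw [one_pow] at hz1 hz2 hz3
    rw [e1, e2] at hz1
    rw [e3, e4] at hz2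
    refine ⟨bounds_of_uncovered hd hp0 hq0 hss ?_ ?_ hz3 hz1 hz2, hz3⟩
    · rwa [← hs]
    · rw [← hs', ha']
      linarith
  have hup : volume (U ∩ {z | o 1 ≤ z 1}) ≤ ENNReal.ofReal (160 * d ^ 3) := by
    have hm : MeasurableSet {z : Plane | o 1 ≤ z 1} :=
      measurableSet_le measurable_const (Plane.measurable_coord 1)
    have hclose : ∀ z ∈ U ∩ {z | o 1 ≤ z 1}, ∀ z' ∈ U ∩ {z | o 1 ≤ z 1},
        |z 0 - z' 0| ≤ 20 * d ∧ (z 0 = z' 0 → |z 1 - z' 1| ≤ 2 * d ^ 2) := by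
      rintro z ⟨hz, hzo⟩ z' ⟨hz', hzo'⟩
      obtain ⟨⟨b1, b2⟩, b3⟩ := hbound z hz
      obtain ⟨⟨b1', b2'⟩, b3'⟩ := hbound z' hz'
      have := closeness_of_bounds hd hd1 hsle b1 b2 b3 b1' b2' b3' (sub_nonneg.2 hzo)
        (sub_nonneg.2 hzo')
      simpa using this
    refine (Plane.volume_le_of_sections (hUm.inter hm) (20 * d) (2 * d ^ 2)
      (fun z hz z' hz' => (hclose z hz z' hz').1)
      (fun z hz z' hz' => (hclose z hz z' hz').2)).trans ?_
    rw [← ENNReal.ofReal_mul (by positivity)]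
    exact ENNReal.ofReal_le_ofReal (by linarith)
  have hdown : volume (U ∩ {z | z 1 ≤ o 1}) ≤ ENNReal.ofReal (160 * d ^ 3) := by
    have hm : MeasurableSet {z : Plane | z 1 ≤ o 1} :=
      measurableSet_le (Plane.measurable_coord 1) measurable_const
    have hclose : ∀ z ∈ U ∩ {z | z 1 ≤ o 1}, ∀ z' ∈ U ∩ {z | z 1 ≤ o 1},
        |z 0 - z' 0| ≤ 20 * d ∧ (z 0 = z' 0 → |z 1 - z' 1| ≤ 2 * d ^ 2) := by
      rintro z ⟨hz, hzo⟩ z' ⟨hz', hzo'⟩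
      obtain ⟨⟨b1, b2⟩, b3⟩ := hbound z hz
      obtain ⟨⟨b1', b2'⟩, b3'⟩ := hbound z' hz'
      have e : ∀ y : ℝ, -s * (o 1 - y) = s * (y - o 1) := fun y => by ring
      have := closeness_of_bounds (s := -s) (y := o 1 - z 1) (y' := o 1 - z' 1) hd hd1
        (by rwa [abs_neg]) (by rwa [e]) (by linarith) (by linarith) (by rwa [e]) (by linarith)
        (by linarith) (sub_nonneg.2 hzo) (sub_nonneg.2 hzo')
      rw [abs_sub_comm (z 1)]
      simpa using this
    refine (Plane.volume_le_of_sections (hUm.inter hm) (20 * d) (2 * d ^ 2)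
      (fun z hz z' hz' => (hclose z hz z' hz').1)
      (fun z hz z' hz' => (hclose z hz z' hz').2)).trans ?_
    rw [← ENNReal.ofReal_mul (by positivity)]
    exact ENNReal.ofReal_le_ofReal (by linarith)
  calc volume U ≤ volume ((U ∩ {z | o 1 ≤ z 1}) ∪ (U ∩ {z | z 1 ≤ o 1})) := by
        refine measure_mono fun z hz => ?_
        rcases le_total (o 1) (z 1) with h | h
        · exact Or.inl ⟨hz, h⟩
        · exact Or.inr ⟨hz, h⟩
    _ ≤ ENNReal.ofReal (160 * d ^ 3) + ENNReal.ofReal (160 * d ^ 3) :=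
        (measure_union_le _ _).trans (add_le_add hup hdown)
    _ = ENNReal.ofReal (320 * d ^ 3) := by
        rw [← ENNReal.ofReal_add (by positivity) (by positivity)]
        congr 1
        ring

/-- The points to the right of `o` at distance of order `d` whose slope seen from `o` is close to
`t / (2 T)`. -/
def slopeCell (o : Plane) (d : ℝ) (T t : ℕ) : Set Plane :=
  {z | z 0 ∈ Icc (o 0 + d / 4) (o 0 + d / 2) ∧
    |z 1 - (o 1 + t / (2 * T) * (z 0 - o 0))| ≤ d / (32 * T)}

/-- The points to the left of `o` at distance of order `d` lying close to the line `op`. -/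
def oppositeStrip (o : Plane) (d : ℝ) (p : Plane) : Set Plane :=
  {z | z 0 ∈ Icc (o 0 - d / 2) (o 0 - d / 4) ∧
    |z 1 - (o 1 + (p 1 - o 1) / (p 0 - o 0) * (z 0 - o 0))| ≤ d ^ 2 / 8}

lemma measurableSet_slopeCell (o : Plane) (d : ℝ) (T t : ℕ) :
    MeasurableSet (slopeCell o d T t) :=
  Plane.measurableSet_strip (f := fun x => o 1 + t / (2 * T) * (x - o 0)) (by fun_prop) _ _ _

lemma measurableSet_oppositeStrip (o : Plane) (d : ℝ) (p : Plane) :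
    MeasurableSet (oppositeStrip o d p) :=
  Plane.measurableSet_strip
    (f := fun x => o 1 + (p 1 - o 1) / (p 0 - o 0) * (x - o 0)) (by fun_prop) _ _ _

lemma volume_slopeCell (o : Plane) {d : ℝ} (hd : 0 < d) (T t : ℕ) :
    volume (slopeCell o d T t) = ENNReal.ofReal (d ^ 2 / (64 * T)) := by
  have h := Plane.volume_strip (f := fun x => o 1 + t / (2 * T) * (x - o 0)) (by fun_prop)
    (o 0 + d / 4) (o 0 + d / 2) (d / (32 * T))
  refine h.trans ?_
  rw [← ENNReal.ofReal_mul (by linarith)]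
  congr 1
  ring

lemma volume_oppositeStrip (o : Plane) {d : ℝ} (hd : 0 < d) (p : Plane) :
    volume (oppositeStrip o d p) = ENNReal.ofReal (d ^ 3 / 16) := by
  have h := Plane.volume_strip (f := fun x => o 1 + (p 1 - o 1) / (p 0 - o 0) * (x - o 0))
    (by fun_prop) (o 0 - d / 2) (o 0 - d / 4) (d ^ 2 / 8)
  refine h.trans ?_
  rw [← ENNReal.ofReal_mul (by linarith)]
  congr 1
  ring

lemma abs_slope_sub_le {o p : Plane} {d : ℝ} (hd : 0 < d) {T t : ℕ} (hT : 0 < T)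
    (hp : p ∈ slopeCell o d T t) :
    |(p 1 - o 1) / (p 0 - o 0) - t / (2 * T)| ≤ 1 / (8 * T) := by
  obtain ⟨⟨h1, h2⟩, h3⟩ := hp
  have hT' : (0 : ℝ) < T := by exact_mod_cast hT
  have ha : 0 < p 0 - o 0 := by linarith
  have e : (p 1 - o 1) / (p 0 - o 0) - t / (2 * T) =
      (p 1 - (o 1 + t / (2 * T) * (p 0 - o 0))) / (p 0 - o 0) := by
    field_simp
    ring
  rw [e, abs_div, abs_of_pos ha, div_le_iff₀ ha]
  refine h3.trans ?_
  have : d / (32 * T) = 1 / (8 * T) * (d / 4) := by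
    field_simp
    norm_num
  rw [this]
  gcongr
  linarith

lemma abs_slope_le {o p : Plane} {d : ℝ} (hd : 0 < d) {T t : ℕ} (ht : t < T)
    (hp : p ∈ slopeCell o d T t) : |(p 1 - o 1) / (p 0 - o 0)| ≤ 1 := by
  have h := abs_slope_sub_le hd (by omega) hp
  have hT : (1 : ℝ) ≤ T := by exact_mod_cast (by omega : 1 ≤ T)
  have ht' : (t : ℝ) ≤ T := by exact_mod_cast ht.le
  have h1 : (t : ℝ) / (2 * T) ≤ 1 / 2 := by
    rw [div_le_iff₀ (by linarith)]
    linarith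
  have h2 : (0 : ℝ) ≤ t / (2 * T) := by positivity
  have h3 : 1 / (8 * (T : ℝ)) ≤ 1 / 8 := by
    rw [div_le_iff₀ (by linarith)]
    linarith
  obtain ⟨h4, h5⟩ := abs_le.1 h
  exact abs_le.2 ⟨by linarith, by linarith⟩

lemma dist_le_of_mem_slopeCell {o p : Plane} {d : ℝ} (hd : 0 < d) {T t : ℕ} (ht : t < T)
    (hp : p ∈ slopeCell o d T t) : |p 1 - o 1| ≤ p 0 - o 0 ∧ dist p o ≤ d := by
  have hs := abs_slope_le hd ht hp
  obtain ⟨⟨h1, h2⟩, -⟩ := hp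
  have ha : 0 < p 0 - o 0 := by linarith
  rw [abs_div, abs_of_pos ha, div_le_one ha] at hs
  refine ⟨hs, (Plane.dist_le_iff _ _ hd.le).2 ?_⟩
  have := sq_le_sq' (abs_le.1 hs).1 (abs_le.1 hs).2
  nlinarith

lemma nearlyAntipodal_of_mem_oppositeStrip {o p q : Plane} {d : ℝ} (hd : 0 < d)
    (hd1 : d ≤ 1 / 100) {T t : ℕ} (ht : t < T) (hp : p ∈ slopeCell o d T t)
    (hq : q ∈ oppositeStrip o d p) : NearlyAntipodal o d p q := by
  have hs := abs_slope_le hd ht hp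
  obtain ⟨hp1, hp2⟩ := dist_le_of_mem_slopeCell hd ht hp
  obtain ⟨⟨h1, h2⟩, -⟩ := hp
  obtain ⟨⟨g1, g2⟩, g3⟩ := hq
  have ha : 0 < p 0 - o 0 := by linarith
  set s := (p 1 - o 1) / (p 0 - o 0) with hsdef
  have hps : p 1 - o 1 = (p 0 - o 0) * s := by
    rw [hsdef]
    field_simp
  refine ⟨⟨by linarith, by linarith⟩, hp1, ⟨by linarith, by linarith⟩, ?_, hp2, ?_⟩
  · have e : (p 1 - o 1) * (o 0 - q 0) - (o 1 - q 1) * (p 0 - o 0) =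
        (p 0 - o 0) * (q 1 - (o 1 + s * (q 0 - o 0))) := by
      rw [hps]
      ring
    rw [e, abs_mul, abs_of_pos ha]
    calc (p 0 - o 0) * |q 1 - (o 1 + s * (q 0 - o 0))| ≤ d / 2 * (d ^ 2 / 8) := by
          gcongr
          linarith
      _ = d ^ 3 / 16 := by ring
  · rw [Plane.dist_le_iff _ _ hd.le]
    have h3 : |s * (q 0 - o 0)| ≤ d / 2 := by
      rw [abs_mul]
      have : |q 0 - o 0| ≤ d / 2 := abs_le.2 ⟨by linarith, by linarith⟩
      nlinarith [abs_nonneg (q 0 - o 0)]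
    obtain ⟨h4, h5⟩ := abs_le.1 h3
    obtain ⟨h6, h7⟩ := abs_le.1 g3
    have hd2 : d ^ 2 / 8 ≤ d / 800 := by nlinarith
    have h8 : (q 1 - o 1) ^ 2 ≤ (d / 2 + d / 800) ^ 2 := sq_le_sq' (by linarith) (by linarith)
    have h9 : (q 0 - o 0) ^ 2 ≤ (d / 2) ^ 2 := sq_le_sq' (by linarith) (by linarith)
    nlinarith

lemma disjoint_oppositeStrip {o p p' : Plane} {d : ℝ} (hd : 0 < d) {T t t' : ℕ} (hT : 0 < T)
    (hTd : 4 * T * d < 1) (htt : t ≠ t') (hp : p ∈ slopeCell o d T t)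
    (hp' : p' ∈ slopeCell o d T t') :
    Disjoint (oppositeStrip o d p) (oppositeStrip o d p') := by
  have hs := abs_slope_sub_le hd hT hp
  have hs' := abs_slope_sub_le hd hT hp'
  rw [Set.disjoint_left]
  rintro z ⟨⟨z1, z2⟩, z3⟩ ⟨-, z4⟩
  set s := (p 1 - o 1) / (p 0 - o 0)
  set s' := (p' 1 - o 1) / (p' 0 - o 0)
  have hT' : (0 : ℝ) < T := by exact_mod_cast hT
  have h1 : |(s - s') * (o 0 - z 0)| ≤ d ^ 2 / 4 := by
    obtain ⟨a1, a2⟩ := abs_le.1 z3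
    obtain ⟨a3, a4⟩ := abs_le.1 z4
    exact abs_le.2 ⟨by linarith, by linarith⟩
  have hz : 0 < o 0 - z 0 := by linarith
  have h2 : |s - s'| ≤ d := by
    rw [abs_mul, abs_of_pos hz] at h1
    by_contra! hc
    nlinarith
  have h3 : (1 : ℝ) ≤ |(t : ℝ) - t'| := by
    have : (1 : ℤ) ≤ |(t : ℤ) - t'| := Int.one_le_abs (by omega)
    exact_mod_cast this
  have h4 : 1 / (2 * (T : ℝ)) ≤ |(t : ℝ) / (2 * T) - t' / (2 * T)| := by
    rw [← sub_div, abs_div, abs_of_pos (by positivity : (0 : ℝ) < 2 * T)]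
    gcongr
  have h5 : |(t : ℝ) / (2 * T) - t' / (2 * T)| ≤ 1 / (8 * T) + d + 1 / (8 * T) := by
    obtain ⟨a1, a2⟩ := abs_le.1 hs
    obtain ⟨a3, a4⟩ := abs_le.1 hs'
    obtain ⟨a5, a6⟩ := abs_le.1 h2
    exact abs_le.2 ⟨by linarith, by linarith⟩
  have h6 : d < 1 / (4 * T) := by
    rw [lt_div_iff₀ (by positivity)]
    linarith
  have e1 : 1 / (2 * (T : ℝ)) = 4 * (1 / (8 * T)) := by
    field_simp
    norm_num
  have e2 : 1 / (4 * (T : ℝ)) = 2 * (1 / (8 * T)) := by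
    field_simp
    norm_num
  linarith

lemma measure_compl_le_exp {α : Type*} [MeasurableSpace α] (μ : Measure α)
    [IsProbabilityMeasure μ] {R : Set α} (hR : MeasurableSet R) {r : ℝ} (hr : 0 ≤ r)
    (h : ENNReal.ofReal r ≤ μ R) : μ Rᶜ ≤ ENNReal.ofReal (Real.exp (-r)) := by
  rw [prob_compl_eq_one_sub hR]
  calc 1 - μ R ≤ 1 - ENNReal.ofReal r := by gcongr
    _ = ENNReal.ofReal (1 - r) := by rw [ENNReal.ofReal_sub _ hr, ENNReal.ofReal_one]
    _ ≤ _ := ENNReal.ofReal_le_ofReal (by linarith [Real.add_one_le_exp (-r)])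

lemma ofReal_exp_neg_pow (r : ℝ) (n : ℕ) :
    ENNReal.ofReal (Real.exp (-r)) ^ n = ENNReal.ofReal (Real.exp (-(n * r))) := by
  rw [← ENNReal.ofReal_pow (Real.exp_pos _).le, ← Real.exp_nat_mul]
  congr 2
  ring

/-- It is unlikely that a given slope cell contains none of the points indexed by `I`. -/
lemma pi_slopeCell_avoided_le {ι : Type*} [Fintype ι] [DecidableEq ι] {o : Plane} (ho : o ∈ quad)
    {d : ℝ} (hd : 0 < d) (hsub : D o d ⊆ Dhat o) {T t : ℕ} (ht : t < T) (I : Finset ι) :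
    (Measure.pi fun _ : ι => unif (Dhat o)) {ω | ∀ i ∈ I, ω i ∉ slopeCell o d T t} ≤
      ENNReal.ofReal (Real.exp (-(I.card * (d ^ 2 / (256 * T))))) := by
  have := isProbabilityMeasure_unif ho
  have hm := measurableSet_slopeCell o d T t
  rw [← ofReal_exp_neg_pow]
  refine pi_le_pow_of_section_subset _ I ?_ _ fun x _ =>
    ⟨(slopeCell o d T t)ᶜ, measure_compl_le_exp _ hm (by positivity) ?_, fun y hy _ => hy⟩
  · have : {ω : ι → Plane | ∀ i ∈ I, ω i ∉ slopeCell o d T t} =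
        ⋂ i ∈ I, (fun ω => ω i) ⁻¹' (slopeCell o d T t)ᶜ := by
      ext ω
      simp
    rw [this]
    exact Finset.measurableSet_biInter _ fun i _ => measurable_pi_apply i hm.compl
  · refine le_trans (le_of_eq ?_) (le_unif hm fun z hz => hsub ?_)
    · rw [volume_slopeCell o hd, ← ENNReal.ofReal_mul (by norm_num)]
      congr 1
      ring
    · exact Metric.mem_closedBall.2 (dist_le_of_mem_slopeCell hd ht hz).2

lemma measurableSet_nearlyAntipodal_coords {ι : Type*} (o : Plane) (d : ℝ) (i j : ι) :
    MeasurableSet {ω : ι → Plane | NearlyAntipodal o d (ω i) (ω j)} := by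
  have h : Measurable fun ω : ι → Plane => (ω i, ω j) := by fun_prop
  exact h (measurableSet_nearlyAntipodal o d)

/-- If every slope cell contains a point indexed by `I`, it is unlikely that no point indexed by
`J` forms a nearly antipodal pair with one of them. -/
lemma pi_no_nearlyAntipodal_le {ι : Type*} [Fintype ι] [DecidableEq ι] {o : Plane} (ho : o ∈ quad)
    {d : ℝ} (hd : 0 < d) (hd1 : d ≤ 1 / 100) (hsub : D o d ⊆ Dhat o) {T : ℕ} (hT : 0 < T)
    (hTd : 4 * T * d < 1) {I J : Finset ι} (hIJ : Disjoint I J) :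
    (Measure.pi fun _ : ι => unif (Dhat o))
      {ω | (∀ t < T, ∃ i ∈ I, ω i ∈ slopeCell o d T t) ∧
        ∀ i ∈ I, ∀ j ∈ J, ¬NearlyAntipodal o d (ω i) (ω j)} ≤
      ENNReal.ofReal (Real.exp (-(J.card * (T * d ^ 3 / 64)))) := by
  have := isProbabilityMeasure_unif ho
  rw [← ofReal_exp_neg_pow]
  refine pi_le_pow_of_section_subset _ J ?_ _ ?_
  · have h1 : MeasurableSet {ω : ι → Plane | ∀ t < T, ∃ i ∈ I, ω i ∈ slopeCell o d T t} := by
      have : {ω : ι → Plane | ∀ t < T, ∃ i ∈ I, ω i ∈ slopeCell o d T t} =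
          ⋂ t : ℕ, ⋂ _ : t < T, ⋃ i ∈ I, (fun ω => ω i) ⁻¹' slopeCell o d T t := by
        ext ω
        simp
      rw [this]
      exact MeasurableSet.iInter fun t => MeasurableSet.iInter fun _ =>
        Finset.measurableSet_biUnion _ fun i _ =>
          measurable_pi_apply i (measurableSet_slopeCell o d T t)
    have h2 : MeasurableSet
        {ω : ι → Plane | ∀ i ∈ I, ∀ j ∈ J, ¬NearlyAntipodal o d (ω i) (ω j)} := by
      have : {ω : ι → Plane | ∀ i ∈ I, ∀ j ∈ J, ¬NearlyAntipodal o d (ω i) (ω j)} =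
          ⋂ i ∈ I, ⋂ j ∈ J, {ω : ι → Plane | NearlyAntipodal o d (ω i) (ω j)}ᶜ := by
        ext ω
        simp
      rw [this]
      exact Finset.measurableSet_biInter _ fun i _ => Finset.measurableSet_biInter _ fun j _ =>
        (measurableSet_nearlyAntipodal_coords o d i j).compl
    exact h1.inter h2
  rintro x ⟨hx, -⟩
  have : Nonempty ι := ⟨(hx 0 hT).choose⟩
  choose! f hfI hf using hx
  set R : Set Plane := ⋃ t ∈ Finset.range T, oppositeStrip o d (x (f t)) with hR
  have hRm : MeasurableSet R :=
    Finset.measurableSet_biUnion _ fun t _ => measurableSet_oppositeStrip o d _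
  have hanti : ∀ t < T, ∀ q ∈ oppositeStrip o d (x (f t)), NearlyAntipodal o d (x (f t)) q :=
    fun t ht q hq => nearlyAntipodal_of_mem_oppositeStrip hd hd1 ht (hf t ht) hq
  refine ⟨Rᶜ, measure_compl_le_exp _ hRm (by positivity) ?_, ?_⟩
  · have hvol : volume R = ENNReal.ofReal (T * (d ^ 3 / 16)) := by
      rw [hR, measure_biUnion_finset]
      · simp only [volume_oppositeStrip o hd, Finset.sum_const, Finset.card_range]
        rw [nsmul_eq_mul, ENNReal.ofReal_mul (by positivity), ENNReal.ofReal_natCast]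
      · intro t ht t' ht' htt
        simp only [Finset.coe_range, mem_Iio] at ht ht'
        exact disjoint_oppositeStrip hd hT hTd htt (hf t ht) (hf t' ht')
      · exact fun t _ => measurableSet_oppositeStrip o d _
    refine le_trans (le_of_eq ?_) (le_unif hRm ?_)
    · rw [hvol, ← ENNReal.ofReal_mul (by norm_num)]
      congr 1
      ring
    · refine iUnion₂_subset fun t ht q hq => hsub (Metric.mem_closedBall.2 ?_)
      exact (hanti t (Finset.mem_range.1 ht) q hq).2.2.2.2.2
  · rintro y ⟨-, hy⟩ hyx j hj hjR
    obtain ⟨t, ht, hq⟩ := mem_iUnion₂.1 hjR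
    have htT := Finset.mem_range.1 ht
    refine hy (f t) (hfI t htT) j hj ?_
    rw [hyx _ (Finset.disjoint_left.1 hIJ (hfI t htT))]
    exact hanti t htT _ hq

/-- `p` is the lexicographically first pair of indices in `P` giving a nearly antipodal pair. -/
def IsFirstAntipodal {ι : Type*} [LinearOrder ι] (o : Plane) (d : ℝ) (P : Finset (ι × ι))
    (ω : ι → Plane) (p : ι × ι) : Prop :=
  p ∈ P ∧ NearlyAntipodal o d (ω p.1) (ω p.2) ∧
    ∀ r ∈ P, toLex r < toLex p → ¬NearlyAntipodal o d (ω r.1) (ω r.2)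

/-- The first nearly antipodal pair not involving the index `k` leaves the point of index `k`
uncovered only with probability `O(d ^ 3)`. -/
lemma pi_first_uncovers_le {ι : Type*} [Fintype ι] [LinearOrder ι] {o : Plane} (ho : o ∈ quad)
    {d : ℝ} (hd : 0 < d) (hd1 : d ≤ 1 / 100) (P : Finset (ι × ι)) (k : ι)
    (hP : ∀ p ∈ P, p.1 ≠ k ∧ p.2 ≠ k) :
    (Measure.pi fun _ : ι => unif (Dhat o))
      {ω | ∃ p, IsFirstAntipodal o d P ω p ∧ 1 < dist (ω k) (ω p.1) ∧ 1 < dist (ω k) (ω p.2)} ≤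
      ENNReal.ofReal (1280 * d ^ 3) := by
  have := isProbabilityMeasure_unif ho
  have hB : MeasurableSet {ω : ι → Plane | ∃ p, IsFirstAntipodal o d P ω p ∧
      1 < dist (ω k) (ω p.1) ∧ 1 < dist (ω k) (ω p.2)} := by
    have : {ω : ι → Plane | ∃ p, IsFirstAntipodal o d P ω p ∧
        1 < dist (ω k) (ω p.1) ∧ 1 < dist (ω k) (ω p.2)} =
        ⋃ p ∈ P, ({ω : ι → Plane | NearlyAntipodal o d (ω p.1) (ω p.2)} ∩
          ⋂ p' ∈ P, ⋂ _ : toLex p' < toLex p,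
            {ω : ι → Plane | NearlyAntipodal o d (ω p'.1) (ω p'.2)}ᶜ) ∩
          ({ω : ι → Plane | 1 < dist (ω k) (ω p.1)} ∩ {ω | 1 < dist (ω k) (ω p.2)}) := by
      ext ω
      simp only [mem_iUnion, mem_inter_iff, mem_iInter, mem_compl_iff, IsFirstAntipodal]
      constructor
      · rintro ⟨p, ⟨h1, h2, h3⟩, h4⟩
        exact ⟨p, h1, ⟨h2, h3⟩, h4⟩
      · rintro ⟨p, h1, ⟨h2, h3⟩, h4⟩
        exact ⟨p, ⟨h1, h2, h3⟩, h4⟩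
    rw [this]
    refine Finset.measurableSet_biUnion _ fun p _ => MeasurableSet.inter (MeasurableSet.inter
      (measurableSet_nearlyAntipodal_coords o d _ _) (Finset.measurableSet_biInter _ fun p' _ =>
        MeasurableSet.iInter fun _ => (measurableSet_nearlyAntipodal_coords o d _ _).compl)) ?_
    exact (measurableSet_lt measurable_const (by fun_prop)).inter
      (measurableSet_lt measurable_const (by fun_prop))
  have h := pi_le_pow_of_section_subset (unif (Dhat o)) {k} hB (ENNReal.ofReal (1280 * d ^ 3)) ?_
  · simpa using h
  rintro x ⟨p, ⟨hpP, hpx, hpmin⟩, -⟩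
  refine ⟨{z | 1 < dist z (x p.1) ∧ 1 < dist z (x p.2)}, ?_, ?_⟩
  · have hm := measurableSet_uncovered (x p.1) (x p.2)
    calc unif (Dhat o) {z | 1 < dist z (x p.1) ∧ 1 < dist z (x p.2)}
        ≤ 4 * ENNReal.ofReal (320 * d ^ 3) :=
          (unif_le ho hm).trans (by gcongr; exact volume_uncovered_le hd hd1 hpx)
      _ = ENNReal.ofReal (1280 * d ^ 3) := by
          rw [← ENNReal.ofReal_ofNat, ← ENNReal.ofReal_mul (by norm_num)]
          congr 1
          ring
  · rintro y ⟨p', ⟨hpP', hpy, hpmin'⟩, hy⟩ hyx j hj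
    have hagree : ∀ r ∈ P, y r.1 = x r.1 ∧ y r.2 = x r.2 := fun r hr =>
      ⟨hyx _ (by simpa using (hP r hr).1), hyx _ (by simpa using (hP r hr).2)⟩
    have hpp : p' = p := by
      rcases lt_trichotomy (toLex p') (toLex p) with hlt | heq | hlt
      · refine absurd ?_ (hpmin p' hpP' hlt)
        rwa [← (hagree p' hpP').1, ← (hagree p' hpP').2]
      · exact toLex.injective heq
      · refine absurd ?_ (hpmin' p hpP hlt)
        rwa [(hagree p hpP).1, (hagree p hpP).2]
    subst hpp
    rw [(hagree p' hpP').1, (hagree p' hpP').2] at hy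
    rwa [Finset.mem_singleton.1 hj]

/-- Union bound for the event that no nearly antipodal pair with indices in `I × J` covers all the
points. -/
lemma pi_no_covering_pair_le {ι : Type*} [Fintype ι] [LinearOrder ι] {o : Plane} (ho : o ∈ quad)
    {d : ℝ} (hd : 0 < d) (hd1 : d ≤ 1 / 100) (hsub : D o d ⊆ Dhat o) {T : ℕ} (hT : 0 < T)
    (hTd : 4 * T * d < 1) {I J : Finset ι} (hIJ : Disjoint I J) :
    (Measure.pi fun _ : ι => unif (Dhat o))
      {ω | ¬∃ i ∈ I, ∃ j ∈ J, NearlyAntipodal o d (ω i) (ω j) ∧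
        ∀ k, dist (ω k) (ω i) ≤ 1 ∨ dist (ω k) (ω j) ≤ 1} ≤
      ENNReal.ofReal (T * Real.exp (-(I.card * (d ^ 2 / (256 * T)))) +
        Real.exp (-(J.card * (T * d ^ 3 / 64))) + Fintype.card ι * (1280 * d ^ 3)) := by
  classical
  have := isProbabilityMeasure_unif ho
  set P : ι → Finset (ι × ι) := fun k => (I ×ˢ J).filter fun p => p.1 ≠ k ∧ p.2 ≠ k
  set A₁ : Set (ι → Plane) := ⋃ t ∈ Finset.range T, {ω | ∀ i ∈ I, ω i ∉ slopeCell o d T t}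
  set A₂ : Set (ι → Plane) := {ω | (∀ t < T, ∃ i ∈ I, ω i ∈ slopeCell o d T t) ∧
    ∀ i ∈ I, ∀ j ∈ J, ¬NearlyAntipodal o d (ω i) (ω j)}
  set A₃ : Set (ι → Plane) := ⋃ k ∈ (Finset.univ : Finset ι), {ω | ∃ p,
    IsFirstAntipodal o d (P k) ω p ∧ 1 < dist (ω k) (ω p.1) ∧ 1 < dist (ω k) (ω p.2)}
  have hcover : {ω | ¬∃ i ∈ I, ∃ j ∈ J, NearlyAntipodal o d (ω i) (ω j) ∧
      ∀ k, dist (ω k) (ω i) ≤ 1 ∨ dist (ω k) (ω j) ≤ 1} ⊆ A₁ ∪ A₂ ∪ A₃ := by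
    intro ω hω
    replace hω : ¬∃ i ∈ I, ∃ j ∈ J, NearlyAntipodal o d (ω i) (ω j) ∧
      ∀ k, dist (ω k) (ω i) ≤ 1 ∨ dist (ω k) (ω j) ≤ 1 := hω
    set Q := (I ×ˢ J).filter fun p => NearlyAntipodal o d (ω p.1) (ω p.2) with hQ
    rcases Q.eq_empty_or_nonempty with hQe | hQne
    · left
      by_cases hc : ∀ t < T, ∃ i ∈ I, ω i ∈ slopeCell o d T t
      · right
        refine ⟨hc, fun i hi j hj hij => ?_⟩
        have : (i, j) ∈ Q := by simp [hQ, hi, hj, hij]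
        simp [hQe] at this
      · left
        push Not at hc
        obtain ⟨t, ht, h⟩ := hc
        exact mem_iUnion₂.2 ⟨t, Finset.mem_range.2 ht, h⟩
    · right
      obtain ⟨p, hpQ, hpmin⟩ := Q.exists_min_image toLex hQne
      obtain ⟨hpIJ, hpN⟩ := Finset.mem_filter.1 hpQ
      obtain ⟨hpI, hpJ⟩ := Finset.mem_product.1 hpIJ
      have hex : ∃ k, 1 < dist (ω k) (ω p.1) ∧ 1 < dist (ω k) (ω p.2) := by
        by_contra! hc
        refine hω ⟨p.1, hpI, p.2, hpJ, hpN, fun k => ?_⟩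
        rcases le_or_gt (dist (ω k) (ω p.1)) 1 with h | h
        · exact Or.inl h
        · exact Or.inr (hc k h)
      obtain ⟨k, hk1, hk2⟩ := hex
      refine mem_iUnion₂.2 ⟨k, Finset.mem_univ k, p, ⟨?_, hpN, ?_⟩, hk1, hk2⟩
      · refine Finset.mem_filter.2 ⟨hpIJ, ?_, ?_⟩
        · rintro rfl
          rw [dist_self] at hk1
          linarith
        · rintro rfl
          rw [dist_self] at hk2
          linarith
      · intro p' hp' hlt hN
        exact absurd (hpmin p' (Finset.mem_filter.2 ⟨(Finset.mem_filter.1 hp').1, hN⟩))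
          (not_le.2 hlt)
  set μ := Measure.pi fun _ : ι => unif (Dhat o)
  have h1 : μ A₁ ≤ ENNReal.ofReal (T * Real.exp (-(I.card * (d ^ 2 / (256 * T))))) := by
    refine (measure_biUnion_finset_le _ _).trans ((Finset.sum_le_sum fun t ht =>
      pi_slopeCell_avoided_le ho hd hsub (Finset.mem_range.1 ht) I).trans (le_of_eq ?_))
    rw [Finset.sum_const, Finset.card_range, nsmul_eq_mul, ENNReal.ofReal_mul (by positivity),
      ENNReal.ofReal_natCast]
  have h2 : μ A₂ ≤ ENNReal.ofReal (Real.exp (-(J.card * (T * d ^ 3 / 64)))) :=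
    pi_no_nearlyAntipodal_le ho hd hd1 hsub hT hTd hIJ
  have h3 : μ A₃ ≤ ENNReal.ofReal (Fintype.card ι * (1280 * d ^ 3)) := by
    refine (measure_biUnion_finset_le _ _).trans ((Finset.sum_le_sum fun k _ =>
      pi_first_uncovers_le ho hd hd1 (P k) k
        fun p hp => (Finset.mem_filter.1 hp).2).trans (le_of_eq ?_))
    rw [Finset.sum_const, Finset.card_univ, nsmul_eq_mul,
      ENNReal.ofReal_mul (p := (Fintype.card ι : ℝ)) (by positivity), ENNReal.ofReal_natCast]
  rw [ENNReal.ofReal_add (by positivity) (by positivity),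
    ENNReal.ofReal_add (by positivity) (by positivity)]
  calc μ _ ≤ μ (A₁ ∪ A₂ ∪ A₃) := measure_mono hcover
    _ ≤ μ A₁ + μ A₂ + μ A₃ :=
        (measure_union_le _ _).trans (by gcongr; exact measure_union_le _ _)
    _ ≤ _ := by gcongr

lemma exists_growth_threshold : ∃ L₀ : ℝ, 1 ≤ L₀ ∧ ∀ L ≥ L₀,
    1536 * L ^ 7 ≤ Real.exp (L / 3) ∧ 2 * L ^ 6 ≤ Real.exp L ∧ L ^ 2 ≤ Real.exp (L / 192) := by
  have key : ∀ (k : ℕ) (a c : ℝ), 0 < a → 0 < c →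
      ∀ᶠ L : ℝ in Filter.atTop, c * L ^ k ≤ Real.exp (a * L) := by
    intro k a c ha hc
    filter_upwards [(isLittleO_pow_exp_pos_mul_atTop (k := k) ha).bound (inv_pos.2 hc),
      Filter.eventually_ge_atTop 0] with L hL hL0
    rw [Real.norm_of_nonneg (by positivity), Real.norm_of_nonneg (Real.exp_pos _).le,
      inv_mul_eq_div, le_div_iff₀ hc] at hL
    linarith
  have h := ((key 7 (1 / 3) 1536 (by norm_num) (by norm_num)).and
    ((key 6 1 2 (by norm_num) (by norm_num)).and
      (key 2 (1 / 192) 1 (by norm_num) (by norm_num))))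
  obtain ⟨L₀, hL₀⟩ := Filter.eventually_atTop.1 h
  refine ⟨max 1 L₀, le_max_left _ _, fun L hL => ?_⟩
  obtain ⟨h1, h2, h3⟩ := hL₀ L ((le_max_right _ _).trans hL)
  refine ⟨?_, ?_, ?_⟩
  · rwa [one_div_mul_eq_div] at h1
  · rwa [one_mul] at h2
  · rwa [one_div_mul_eq_div, one_mul] at h3

/-- The failure probability given by the union bound is `O((log b) ^ (-3/2))`. Here `E` is the
cube root of `b`, `L` its logarithm, `n`, `m` are the sizes of the two halves of the blue points
and `N` is the total number of points. -/
lemma failure_bound {E L T n m N : ℝ} (hE : E = Real.exp (L / 3)) (hL : 1 ≤ L)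
    (h7 : 1536 * L ^ 7 ≤ E) (h6 : 2 * L ^ 6 ≤ Real.exp L) (h2 : L ^ 2 ≤ Real.exp (L / 192))
    (hT : L ^ 4 ≤ T) (hT' : T ≤ 2 * L ^ 4) (hn : E ^ 3 / 3 ≤ n) (hm : E ^ 3 / 3 ≤ m)
    (hN : N ≤ 2 * (E ^ 3 * L ^ (3 / 2 : ℝ))) :
    T * Real.exp (-(n * ((1 / (E * L)) ^ 2 / (256 * T)))) +
      Real.exp (-(m * (T * (1 / (E * L)) ^ 3 / 64))) + N * (1280 * (1 / (E * L)) ^ 3) ≤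
      2562 / L ^ (3 / 2 : ℝ) := by
  have hL0 : 0 < L := by linarith
  have hE0 : 0 < E := by rw [hE]; exact Real.exp_pos _
  have hT0 : 0 < T := lt_of_lt_of_le (by positivity) hT
  have hn0 : 0 ≤ n := le_trans (by positivity) hn
  have hm0 : 0 ≤ m := le_trans (by positivity) hm
  set s := L ^ (3 / 2 : ℝ) with hs
  have hs0 : 0 < s := Real.rpow_pos_of_pos hL0 _
  have hs2 : s ≤ L ^ 2 := by
    rw [hs, ← Real.rpow_natCast]
    exact Real.rpow_le_rpow_of_exponent_le hL (by norm_num)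
  have hss : s * s = L ^ 3 := by
    rw [hs, ← Real.rpow_add hL0, ← Real.rpow_natCast]
    norm_num
  have t1 : T * Real.exp (-(n * ((1 / (E * L)) ^ 2 / (256 * T)))) ≤ 1 / s := by
    have hexp : L ≤ n * ((1 / (E * L)) ^ 2 / (256 * T)) := by
      calc L ≤ E / (1536 * L ^ 6) := by
            rw [le_div_iff₀ (by positivity)]
            linarith
        _ = E ^ 3 / 3 * ((1 / (E * L)) ^ 2 / (256 * (2 * L ^ 4))) := by
            field_simp
            norm_num
        _ ≤ n * ((1 / (E * L)) ^ 2 / (256 * T)) := by gcongr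
    calc T * Real.exp (-(n * ((1 / (E * L)) ^ 2 / (256 * T))))
        ≤ 2 * L ^ 4 * Real.exp (-L) := by gcongr
      _ ≤ 1 / s := by
          rw [le_div_iff₀ hs0, Real.exp_neg, ← div_eq_mul_inv, div_mul_eq_mul_div,
            div_le_one (Real.exp_pos _)]
          refine le_trans ?_ h6
          calc 2 * L ^ 4 * s ≤ 2 * L ^ 4 * L ^ 2 := by gcongr
            _ = 2 * L ^ 6 := by ring
  have t2 : Real.exp (-(m * (T * (1 / (E * L)) ^ 3 / 64))) ≤ 1 / s := by
    have hexp : L / 192 ≤ m * (T * (1 / (E * L)) ^ 3 / 64) := by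
      calc L / 192 = E ^ 3 / 3 * (L ^ 4 * (1 / (E * L)) ^ 3 / 64) := by
            field_simp
            norm_num
        _ ≤ m * (T * (1 / (E * L)) ^ 3 / 64) := by gcongr
    calc Real.exp (-(m * (T * (1 / (E * L)) ^ 3 / 64))) ≤ Real.exp (-(L / 192)) := by gcongr
      _ ≤ 1 / s := by
          rw [Real.exp_neg, ← one_div]
          exact one_div_le_one_div_of_le hs0 (hs2.trans h2)
  have t3 : N * (1280 * (1 / (E * L)) ^ 3) ≤ 2560 / s := by
    calc N * (1280 * (1 / (E * L)) ^ 3) ≤ 2 * (E ^ 3 * s) * (1280 * (1 / (E * L)) ^ 3) := by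
          gcongr
      _ = 2560 * s / L ^ 3 := by
          field_simp
          norm_num
      _ = 2560 / s := by
          rw [← hss]
          field_simp
  have e : 2562 / s = 1 / s + 1 / s + 2560 / s := by ring
  rw [e]
  linarith

/-- There are `c > 0` and `b₀` (independent of `o`) such that for all integers
`b ≥ b₀`, all positive integers `w < b (log b)^{3/2}`, and all `o ∈ ℝ₊²` with `D_δ(o) ⊆ ℝ₊²`:
if `w + b` points are chosen i.i.d. uniformly from `D̂₁(o)` (the first `w` white, the last
`b` blue), then with probability at least `1 − c/(log b)^{3/2}` there are two distinct blue
points in `D_δ(o)` at distance at most `1` from each other such that every one of the `w + b`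
points is within distance `1` of one of them. -/
theorem local_blue_connected_dominating_pair :
    ∃ c > (0 : ℝ), ∃ b₀ : ℕ, ∀ b : ℕ, b₀ ≤ b → ∀ w : ℕ, 0 < w →
      (w : ℝ) < (b : ℝ) * (Real.log b) ^ (3/2 : ℝ) →
      ∀ o : Plane, o ∈ quad → D o (δ b) ⊆ quad →
        ENNReal.ofReal (1 - c / (Real.log b) ^ (3/2 : ℝ)) ≤
          (Measure.pi fun _ : Fin (w + b) => unif (Dhat o))
            {ω | ∃ g₁ g₂ : Fin (w + b), g₁ ≠ g₂ ∧ w ≤ (g₁ : ℕ) ∧ w ≤ (g₂ : ℕ) ∧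
              ω g₁ ∈ D o (δ b) ∧ ω g₂ ∈ D o (δ b) ∧ dist (ω g₁) (ω g₂) ≤ 1 ∧
              ∀ j : Fin (w + b), dist (ω j) (ω g₁) ≤ 1 ∨ dist (ω j) (ω g₂) ≤ 1} := by
  obtain ⟨L₀, hL₀, hgrowth⟩ := exists_growth_threshold
  refine ⟨2562, by norm_num, max 2 ⌈Real.exp L₀⌉₊, fun b hb w _ hw o ho hquad => ?_⟩
  have hb2 : 2 ≤ b := (le_max_left _ _).trans hb
  have hb0 : (0 : ℝ) < b := by exact_mod_cast (by omega : 0 < b)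
  have hLb : L₀ ≤ Real.log b := by
    rw [Real.le_log_iff_exp_le hb0]
    exact (Nat.le_ceil _).trans (by exact_mod_cast (le_max_right _ _).trans hb)
  set L := Real.log b with hL
  obtain ⟨h7, h6, h2⟩ := hgrowth L hLb
  have hL1 : 1 ≤ L := hL₀.trans hLb
  have hL0 : 0 < L := by linarith
  set E := (b : ℝ) ^ (1 / 3 : ℝ) with hE
  have hEexp : E = Real.exp (L / 3) := by
    rw [hE, Real.rpow_def_of_pos hb0, hL]
    congr 1
    ring
  have hE3 : E ^ 3 = b := by
    rw [hE, ← Real.rpow_natCast, ← Real.rpow_mul hb0.le]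
    norm_num
  rw [← hEexp] at h7
  have hpow : ∀ k : ℕ, 1 ≤ L ^ k := fun k => one_le_pow₀ hL1
  have hE0 : 0 < E := by linarith [hpow 7]
  have hδ : δ b = 1 / (E * L) := rfl
  have hd : 0 < δ b := by
    rw [hδ]
    positivity
  have hd1 : δ b ≤ 1 / 100 := by
    rw [hδ]
    exact one_div_le_one_div_of_le (by norm_num) (by nlinarith [hpow 7])
  obtain ⟨T, hT, hT'⟩ : ∃ T : ℕ, L ^ 4 ≤ T ∧ (T : ℝ) ≤ 2 * L ^ 4 := by
    refine ⟨⌈L ^ 4⌉₊, Nat.le_ceil _, ?_⟩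
    linarith [Nat.ceil_lt_add_one (by positivity : 0 ≤ L ^ 4), hpow 4]
  have hT0 : 0 < T := by
    have : (0 : ℝ) < T := lt_of_lt_of_le (by positivity) hT
    exact_mod_cast this
  have hTd : 4 * T * δ b < 1 := by
    rw [hδ, mul_one_div, div_lt_one (by positivity)]
    calc (4 : ℝ) * T ≤ 8 * L ^ 4 := by linarith
      _ < 1536 * L ^ 7 * L := by
          have : L ^ 4 ≤ L ^ 8 := pow_le_pow_right₀ hL1 (by norm_num)
          nlinarith [hpow 4]
      _ ≤ E * L := by gcongr
  have hsub : D o (δ b) ⊆ Dhat o := fun z hz =>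
    ⟨Metric.closedBall_subset_closedBall (by linarith) hz, hquad hz⟩
  have := isProbabilityMeasure_unif ho
  set mid : Fin (w + b) := ⟨w + b / 2, by omega⟩ with hmid
  set I : Finset (Fin (w + b)) := Finset.Ico ⟨w, by omega⟩ mid with hI
  set J : Finset (Fin (w + b)) := Finset.Ici mid with hJ
  have hIJ : Disjoint I J := by
    rw [Finset.disjoint_left]
    intro i hi hj
    exact absurd (Finset.mem_Ici.1 hj) (not_le.2 (Finset.mem_Ico.1 hi).2)
  have hIcard : I.card = b / 2 := by
    rw [hI, Fin.card_Ico]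
    simp [hmid]
  have hJcard : J.card = b - b / 2 := by
    rw [hJ, Fin.card_Ici]
    simp only [hmid]
    omega
  have hcard : ∀ n : ℕ, b ≤ 3 * n → E ^ 3 / 3 ≤ n := by
    intro n hn
    rw [hE3]
    have : (b : ℝ) ≤ 3 * n := by exact_mod_cast hn
    linarith
  have hfail := pi_no_covering_pair_le ho hd hd1 hsub hT0 hTd hIJ
  have hbound : (T : ℝ) * Real.exp (-(I.card * (δ b ^ 2 / (256 * T)))) +
      Real.exp (-(J.card * (T * δ b ^ 3 / 64))) +
      Fintype.card (Fin (w + b)) * (1280 * δ b ^ 3) ≤ 2562 / L ^ (3 / 2 : ℝ) := by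
    refine failure_bound hEexp hL1 h7 h6 h2 hT hT' (hcard _ (by omega)) (hcard _ (by omega)) ?_
    have : 1 ≤ L ^ (3 / 2 : ℝ) := Real.one_le_rpow hL1 (by norm_num)
    rw [Fintype.card_fin, hE3]
    push_cast
    nlinarith
  replace hfail := hfail.trans (ENNReal.ofReal_le_ofReal hbound)
  set S : Set (Fin (w + b) → Plane) := {ω | ∃ i ∈ I, ∃ j ∈ J, NearlyAntipodal o (δ b) (ω i) (ω j) ∧
    ∀ k, dist (ω k) (ω i) ≤ 1 ∨ dist (ω k) (ω j) ≤ 1}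
  have hprob : ENNReal.ofReal (1 - 2562 / L ^ (3 / 2 : ℝ)) ≤
      (Measure.pi fun _ : Fin (w + b) => unif (Dhat o)) S := by
    rw [ENNReal.ofReal_sub _ (by positivity), ENNReal.ofReal_one, tsub_le_iff_right]
    calc (1 : ℝ≥0∞) = (Measure.pi fun _ : Fin (w + b) => unif (Dhat o)) (S ∪ Sᶜ) := by
          rw [union_compl_self, measure_univ]
      _ ≤ _ := (measure_union_le _ _).trans (by gcongr; exact hfail)
  refine hprob.trans (measure_mono ?_)
  rintro ω ⟨i, hi, j, hj, hij, hcov⟩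
  have hpi := hij.2.2.2.2.1
  have hpj := hij.2.2.2.2.2
  refine ⟨i, j, ?_, (Finset.mem_Ico.1 hi).1, ?_, Metric.mem_closedBall.2 hpi,
    Metric.mem_closedBall.2 hpj, ?_, hcov⟩
  · rintro rfl
    exact Finset.disjoint_left.1 hIJ hi hj
  · have hmj : mid ≤ j := Finset.mem_Ici.1 hj
    exact le_trans (Nat.le_add_right w (b / 2)) hmj
  · linarith [dist_triangle_right (ω i) (ω j) o]
end
end

section
/- There exist a constant c̃ > 0 and n₀ such that for all n ≥ n₀ and all indices i with α_n ≤ i < n − α_n, the conditional probability that vertex i is pruned by Rule 2, given the event D_i ∩ A_i, is at least 1 − c̃/(log ξ_n)^{3/2}. -/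
open MeasureTheory Real Set
open scoped ENNReal

noncomputable section

/-- The square region `Q = [0, ℓ]²`. -/
def square (ℓ : ℝ) : Set Plane := {p | p 0 ∈ Set.Icc 0 ℓ ∧ p 1 ∈ Set.Icc 0 ℓ}

/-- The uniform probability measure on the square `[0, ℓ]²`. -/
def unifSq (ℓ : ℝ) : Measure Plane := (volume (square ℓ))⁻¹ • volume.restrict (square ℓ)

/-- The joint law of `n` points `V₁, …, V_n` chosen independently and uniformly at random from
the square `[0, ℓ]²`. -/
def gMeasure (n : ℕ) (ℓ : ℝ) : Measure (Fin n → Plane) := Measure.pi fun _ => unifSq ℓ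

/-- The (closed) neighborhood `N(i)` of vertex `i` in the unit disk graph on the points
`ω 0, …, ω (n-1)`: the vertex `i` together with all vertices adjacent to it. -/
def nbhd {n : ℕ} (ω : Fin n → Plane) (i : Fin n) : Set (Fin n) :=
  {j | j = i ∨ (j ≠ i ∧ dist (ω i) (ω j) ≤ 1)}

/-- Vertex `i` is pruned by Rule 2: there are `i₁ > i₂ > i` with `i₁, i₂ ∈ N(i)`, `i₁`
adjacent to `i₂`, and `N(i) ⊆ N(i₁) ∪ N(i₂)`. (Here vertex IDs are ordered as the indices.) -/
def Pruned {n : ℕ} (ω : Fin n → Plane) (i : Fin n) : Prop :=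
  ∃ i₁ i₂ : Fin n, i < i₂ ∧ i₂ < i₁ ∧ i₁ ∈ nbhd ω i ∧ i₂ ∈ nbhd ω i ∧
    dist (ω i₁) (ω i₂) ≤ 1 ∧ nbhd ω i ⊆ nbhd ω i₁ ∪ nbhd ω i₂

/-- `U` is the number of vertices pruned by Rule 2. -/
def U (n : ℕ) (ω : Fin n → Plane) : ℕ := Set.ncard {i : Fin n | Pruned ω i}

/-- `ρ_i^{(b)}`: the number of points with index larger than `i` lying within distance 1
of `V_i`. (Indices are 0-based, so index `i` corresponds to the 1-based ID `i + 1`.) -/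
def ρb (n : ℕ) (i : Fin n) (ω : Fin n → Plane) : ℕ :=
  Set.ncard {j : Fin n | i < j ∧ dist (ω j) (ω i) ≤ 1}

/-- `ρ_i^{(w)}`: the number of points with index smaller than `i` lying within distance 1
of `V_i`. -/
def ρw (n : ℕ) (i : Fin n) (ω : Fin n → Plane) : ℕ :=
  Set.ncard {j : Fin n | j < i ∧ dist (ω j) (ω i) ≤ 1}

/-- `|D̂₁(V_i)|`: the area of `D₁(V_i) ∩ Q_n`. -/
def areaDhat (ℓ : ℝ) {n : ℕ} (i : Fin n) (ω : Fin n → Plane) : ℝ :=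
  (volume (Metric.closedBall (ω i) 1 ∩ square ℓ)).toReal

/-- `μ_b(i) = (n − i)|D̂₁(V_i)|/ℓ²` (with the 1-based ID of the vertex of index `i`
being `i + 1`). -/
def μb (n : ℕ) (ℓ : ℝ) (i : Fin n) (ω : Fin n → Plane) : ℝ :=
  ((n : ℝ) - ((i : ℕ) + 1)) * areaDhat ℓ i ω / ℓ ^ 2

/-- `μ_w(i) = (i − 1)|D̂₁(V_i)|/ℓ²` (with the 1-based ID of the vertex of index `i`
being `i + 1`). -/
def μw (n : ℕ) (ℓ : ℝ) (i : Fin n) (ω : Fin n → Plane) : ℝ :=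
  ((i : ℕ) : ℝ) * areaDhat ℓ i ω / ℓ ^ 2

/-- The event `A_i`: the closed disk of radius `r` centered at `V_i` is contained in `Q_n`. -/
def eventA (n : ℕ) (ℓ r : ℝ) (i : Fin n) : Set (Fin n → Plane) :=
  {ω | Metric.closedBall (ω i) r ⊆ square ℓ}

/-- The event `D_i`: both `|ρ_i^{(b)} − μ_b(i)| < μ_b(i)/2` and
`|ρ_i^{(w)} − μ_w(i)| < μ_w(i)/2` hold. -/
def eventD (n : ℕ) (ℓ : ℝ) (i : Fin n) : Set (Fin n → Plane) :=
  {ω | |(ρb n i ω : ℝ) - μb n ℓ i ω| < μb n ℓ i ω / 2 ∧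
       |(ρw n i ω : ℝ) - μw n ℓ i ω| < μw n ℓ i ω / 2}

theorem lintegral_eval {ι E : Type*} [Fintype ι] [MeasurableSpace E]
    (P : Measure E) [IsProbabilityMeasure P] (i : ι) {h : E → ℝ≥0∞} (hh : Measurable h) :
    ∫⁻ ω : ι → E, h (ω i) ∂(Measure.pi fun _ => P) = ∫⁻ x, h x ∂P :=
  (measurePreserving_eval (fun _ : ι => P) i).lintegral_comp hh

theorem measure_abs_sub_le_of_second_moment {Ω : Type*} [MeasurableSpace Ω] {μ : Measure Ω}
    [IsProbabilityMeasure μ] {X : Ω → ℝ≥0∞} (hX : Measurable X) {m δ : ℝ} (hm : 0 < m)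
    (hδ : 0 ≤ δ) (h1 : ∫⁻ ω, X ω ∂μ = ENNReal.ofReal m)
    (h2 : ∫⁻ ω, X ω ^ 2 ∂μ ≤ ENNReal.ofReal ((1 + δ) * m ^ 2)) :
    μ {ω | m / 2 ≤ |(X ω).toReal - m|} ≤ ENNReal.ofReal (4 * δ) := by
  have hfin : ∀ᵐ ω ∂μ, X ω < ∞ := ae_lt_top hX (by rw [h1]; exact ENNReal.ofReal_ne_top)
  have hE : ∫ ω, (X ω).toReal ∂μ = m := by
    rw [integral_toReal hX.aemeasurable hfin, h1, ENNReal.toReal_ofReal hm.le]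
  have hL : MemLp (fun ω => (X ω).toReal) 2 μ := by
    refine ⟨hX.ennreal_toReal.aestronglyMeasurable, ?_⟩
    rw [eLpNorm_lt_top_iff_lintegral_rpow_enorm_lt_top (by simp) (by simp)]
    refine lt_of_le_of_lt ?_ (h2.trans_lt ENNReal.ofReal_lt_top)
    refine lintegral_mono_ae (hfin.mono fun ω hω => ?_)
    simp only [ENNReal.toReal_ofNat, ENNReal.rpow_ofNat]
    rw [Real.enorm_of_nonneg ENNReal.toReal_nonneg, ENNReal.ofReal_toReal hω.ne]
  have hE2 : ∫ ω, (X ω).toReal ^ 2 ∂μ ≤ (1 + δ) * m ^ 2 := by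
    have : ∫ ω, (X ω).toReal ^ 2 ∂μ = (∫⁻ ω, X ω ^ 2 ∂μ).toReal := by
      rw [← integral_toReal (hX.pow_const 2).aemeasurable
        (hfin.mono fun ω hω => ENNReal.pow_lt_top hω)]
      simp [ENNReal.toReal_pow]
    rw [this]
    exact ENNReal.toReal_le_of_le_ofReal (by positivity) h2
  have hv : ProbabilityTheory.variance (fun ω => (X ω).toReal) μ ≤ δ * m ^ 2 := by
    rw [ProbabilityTheory.variance_eq_sub hL]
    simp only [Pi.pow_apply]
    rw [hE]; linarith
  have hc := ProbabilityTheory.meas_ge_le_variance_div_sq hL (half_pos hm)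
  rw [hE] at hc
  refine hc.trans (ENNReal.ofReal_le_ofReal ?_)
  rw [div_le_iff₀ (by positivity)]
  linarith

section Resampling

variable {ι E : Type*} [Fintype ι] [DecidableEq ι] [MeasurableSpace E]
  (P : Measure E) [IsProbabilityMeasure P]

theorem measurePreserving_update (i : ι) :
    MeasurePreserving (fun z : (ι → E) × E => Function.update z.1 i z.2)
      ((Measure.pi fun _ => P).prod P) (Measure.pi fun _ => P) := by
  have hm : Measurable (fun z : (ι → E) × E => Function.update z.1 i z.2) := by
    refine measurable_pi_iff.2 fun j => ?_
    by_cases h : j = i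
    · subst h; simpa using measurable_snd
    · simp only [Function.update_of_ne h]
      fun_prop
  refine ⟨hm, (Measure.pi_eq fun s hs => ?_).symm⟩
  rw [Measure.map_apply hm (MeasurableSet.univ_pi hs)]
  have : (fun z : (ι → E) × E => Function.update z.1 i z.2) ⁻¹' univ.pi s =
      (univ.pi (Function.update s i univ)) ×ˢ s i := by
    ext z
    simp only [mem_preimage, mem_pi, mem_univ, true_implies, mem_prod]
    constructor
    · intro h
      refine ⟨fun j => ?_, by simpa using h i⟩
      by_cases hj : j = i
      · subst hj; simp
      · simpa [hj] using h j
    · rintro ⟨h, hi⟩ j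
      by_cases hj : j = i
      · subst hj; simpa using hi
      · simpa [hj] using h j
  rw [this, Measure.prod_prod, Measure.pi_pi, ← Finset.prod_erase_mul _ _ (Finset.mem_univ i),
    ← Finset.prod_erase_mul _ (fun j => P (s j)) (Finset.mem_univ i)]
  simp only [Function.update_self, measure_univ, mul_one]
  congr 1
  refine Finset.prod_congr rfl fun j hj => ?_
  rw [Function.update_of_ne (Finset.ne_of_mem_erase hj)]

theorem lintegral_resample (i : ι) {h : (ι → E) → ℝ≥0∞} (hh : Measurable h) :
    ∫⁻ ω, h ω ∂(Measure.pi fun _ => P) =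
      ∫⁻ ω, ∫⁻ x, h (Function.update ω i x) ∂P ∂(Measure.pi fun _ => P) := by
  have hp := measurePreserving_update P i
  rw [← hp.lintegral_comp hh, lintegral_prod (fun z : (ι → E) × E => h (Function.update z.1 i z.2))
    (hh.comp hp.measurable).aemeasurable]

theorem measure_pi_eq_lintegral_update (i : ι) {T : Set (ι → E)} (hT : MeasurableSet T) :
    (Measure.pi fun _ => P) T =
      ∫⁻ v, (Measure.pi fun _ => P) {ω | Function.update ω i v ∈ T} ∂P := by
  have hp := measurePreserving_update P i
  rw [← hp.measure_preimage hT.nullMeasurableSet, Measure.prod_apply_symm (hp.measurable hT)]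
  rfl

end Resampling

section Pairs

variable {ι E : Type*} [Fintype ι] [DecidableEq ι] [MeasurableSpace E]

/-- The number of `j ∈ G` with `ω j ∈ S`. -/
def hitCount (G : Finset ι) (S : Set E) (ω : ι → E) : ℝ≥0∞ :=
  ∑ j ∈ G, S.indicator 1 (ω j)

/-- The number of pairs in `G₁ × G₂` whose points form a pair in `S`. -/
def pairCount (G₁ G₂ : Finset ι) (S : Set (E × E)) (ω : ι → E) : ℝ≥0∞ :=
  ∑ j ∈ G₁, ∑ k ∈ G₂, S.indicator 1 (ω j, ω k)

/-- The number of triples `(j, k, l)`, with `(j, k) ∈ G₁ × G₂` and `l ≠ j, k`, whose points form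
a triple in `T`. -/
def tripleCount (G₁ G₂ : Finset ι) (T : Set ((E × E) × E)) (ω : ι → E) : ℝ≥0∞ :=
  ∑ j ∈ G₁, ∑ k ∈ G₂, ∑ l ∈ {l : ι | l ≠ j ∧ l ≠ k}, T.indicator 1 ((ω j, ω k), ω l)

variable (P : Measure E) [IsProbabilityMeasure P]

theorem measurable_indicator_pair {ι E : Type*} [MeasurableSpace E] {S : Set (E × E)}
    (hS : MeasurableSet S) (j k : ι) :
    Measurable fun ω : ι → E => S.indicator (1 : E × E → ℝ≥0∞) (ω j, ω k) :=
  (measurable_one.indicator hS).comp (by fun_prop)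

theorem measurable_pairCount {ι E : Type*} [MeasurableSpace E] {S : Set (E × E)}
    (hS : MeasurableSet S) (G₁ G₂ : Finset ι) :
    Measurable (pairCount G₁ G₂ S) :=
  Finset.measurable_fun_sum _ fun j _ => Finset.measurable_fun_sum _ fun k _ =>
    measurable_indicator_pair hS j k

theorem lintegral_indicator_fst {E : Type*} [MeasurableSpace E] (P : Measure E)
    {S : Set (E × E)} (hS : MeasurableSet S) (y : E) :
    ∫⁻ x, S.indicator (1 : E × E → ℝ≥0∞) (x, y) ∂P = P {x | (x, y) ∈ S} := by
  exact lintegral_indicator_one (hS.preimage (by fun_prop : Measurable fun x : E => (x, y)))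

theorem lintegral_indicator_snd {E F : Type*} [MeasurableSpace E] [MeasurableSpace F]
    (P : Measure E) {S : Set (F × E)}
    (hS : MeasurableSet S) (x : F) :
    ∫⁻ y, S.indicator (1 : F × E → ℝ≥0∞) (x, y) ∂P = P {y | (x, y) ∈ S} := by
  exact lintegral_indicator_one (hS.preimage (by fun_prop : Measurable fun y : E => (x, y)))

theorem measure_hitCount_deviation (G : Finset ι) {S : Set E} (hS : MeasurableSet S) {b : ℝ}
    (hb : 0 < b) (hPS : P S = ENNReal.ofReal b) (hG : G.Nonempty) :
    (Measure.pi fun _ : ι => P) {ω | G.card * b / 2 ≤ |(hitCount G S ω).toReal - G.card * b|} ≤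
      ENNReal.ofReal (4 / (G.card * b)) := by
  have hf : Measurable (S.indicator (1 : E → ℝ≥0∞)) := measurable_one.indicator hS
  have hj : ∀ j : ι, Measurable fun ω : ι → E => S.indicator (1 : E → ℝ≥0∞) (ω j) :=
    fun j => hf.comp (measurable_pi_apply j)
  have hmm : ∀ j k : ι, Measurable fun ω : ι → E =>
      S.indicator (1 : E → ℝ≥0∞) (ω j) * S.indicator 1 (ω k) := fun j k => (hj j).mul (hj k)
  have hI : ∫⁻ x, S.indicator 1 x ∂P = ENNReal.ofReal b := by
    rw [lintegral_indicator_one hS, hPS]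
  have hcard : (0 : ℝ) < G.card := by exact_mod_cast hG.card_pos
  have h1 : ∫⁻ ω : ι → E, hitCount G S ω ∂(Measure.pi fun _ => P) =
      ENNReal.ofReal (G.card * b) := by
    simp only [hitCount]
    rw [lintegral_finsetSum _ fun j _ => hj j]
    simp only [lintegral_eval P _ hf, hI, Finset.sum_const, nsmul_eq_mul]
    rw [ENNReal.ofReal_mul hcard.le, ENNReal.ofReal_natCast]
  have hterm : ∀ j k : ι, ∫⁻ ω : ι → E, S.indicator (1 : E → ℝ≥0∞) (ω j) * S.indicator 1 (ω k)
      ∂(Measure.pi fun _ => P) ≤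
        ENNReal.ofReal b * ENNReal.ofReal b + if j = k then ENNReal.ofReal b else 0 := by
    intro j k
    by_cases hjk : j = k
    · subst hjk
      simp only [if_true]
      refine le_trans ?_ le_add_self
      rw [← hI, ← lintegral_eval P j hf]
      refine lintegral_mono fun ω => ?_
      by_cases hω : ω j ∈ S <;> simp [hω]
    · rw [lintegral_resample P k (hmm j k)]
      simp only [Function.update_self, Function.update_of_ne hjk, hjk, if_false, add_zero]
      simp only [lintegral_const_mul _ hf, hI]
      rw [lintegral_mul_const _ (hj j), lintegral_eval P j hf, hI]
  have h2 : ∫⁻ ω : ι → E, hitCount G S ω ^ 2 ∂(Measure.pi fun _ => P) ≤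
      ENNReal.ofReal ((1 + 1 / (G.card * b)) * (G.card * b) ^ 2) := by
    simp only [hitCount, sq, Finset.sum_mul_sum]
    rw [lintegral_finsetSum _ fun j _ => Finset.measurable_fun_sum _ fun k _ => hmm j k]
    simp_rw [lintegral_finsetSum _ fun k _ => hmm _ k]
    refine (Finset.sum_le_sum fun j _ => Finset.sum_le_sum fun k _ => hterm j k).trans ?_
    simp only [Finset.sum_add_distrib, Finset.sum_const, Finset.sum_ite_eq, nsmul_eq_mul]
    rw [Finset.sum_congr rfl fun x hx => if_pos hx]
    simp only [Finset.sum_const, nsmul_eq_mul]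
    rw [← ENNReal.ofReal_natCast, ← ENNReal.ofReal_mul hb.le, ← ENNReal.ofReal_mul hcard.le,
      ← ENNReal.ofReal_mul hcard.le, ← ENNReal.ofReal_mul hcard.le,
      ← ENNReal.ofReal_add (by positivity) (by positivity)]
    refine ENNReal.ofReal_le_ofReal (le_of_eq ?_)
    field_simp
  have := measure_abs_sub_le_of_second_moment (μ := Measure.pi fun _ : ι => P)
    (Finset.measurable_fun_sum _ fun j _ => hj j : Measurable fun ω => hitCount G S ω)
    (mul_pos hcard hb) (by positivity) h1 h2
  rwa [mul_one_div] at this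

variable {P} {S : Set (E × E)} {R : Set E} {a q : ℝ≥0∞}

theorem lintegral_indicator_pair (hS : MeasurableSet S) (hR : MeasurableSet R)
    (hPR : P R = a) (hsub : ∀ x y, (x, y) ∈ S → x ∈ R)
    (hq : ∀ x ∈ R, P {y | (x, y) ∈ S} = q) {j k : ι} (hjk : j ≠ k) :
    ∫⁻ ω : ι → E, S.indicator 1 (ω j, ω k) ∂(Measure.pi fun _ => P) = a * q := by
  have hsec : ∀ x, P {y | (x, y) ∈ S} = R.indicator 1 x * q := by
    intro x
    by_cases hx : x ∈ R
    · simp [hx, hq]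
    · have : {y | (x, y) ∈ S} = ∅ := by ext y; simpa using fun h => hx (hsub x y h)
      simp [hx, this]
  have hRm : Measurable (R.indicator (1 : E → ℝ≥0∞)) := measurable_one.indicator hR
  rw [lintegral_resample P k (measurable_indicator_pair hS j k)]
  simp only [Function.update_self, Function.update_of_ne hjk]
  simp only [lintegral_indicator_snd P hS, hsec]
  have hRj : Measurable fun ω : ι → E => R.indicator (1 : E → ℝ≥0∞) (ω j) :=
    hRm.comp (measurable_pi_apply j)
  rw [lintegral_mul_const _ hRj, lintegral_eval P j hRm,
    lintegral_indicator_one hR, hPR]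

theorem lintegral_indicator_pair_mul_le (hS : MeasurableSet S) (hR : MeasurableSet R)
    (hPR : P R = a) (hsub : ∀ x y, (x, y) ∈ S → x ∈ R)
    (hq : ∀ x ∈ R, P {y | (x, y) ∈ S} = q) (hq' : ∀ y, P {x | (x, y) ∈ S} ≤ 2 * q)
    {j j' k k' : ι} (hjk : j ≠ k) (hjk' : j ≠ k') (hj'k : j' ≠ k) (hj'k' : j' ≠ k') :
    ∫⁻ ω : ι → E, S.indicator 1 (ω j, ω k) * S.indicator 1 (ω j', ω k')
      ∂(Measure.pi fun _ => P) ≤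
      (a * q) * (a * q) + (if j = j' then a * q * q else 0) +
        (if k = k' then a * q * (2 * q) else 0) +
        (if j = j' then if k = k' then a * q else 0 else 0) := by
  have hm := measurable_indicator_pair (ι := ι) hS
  have hmm : ∀ j j' k k' : ι, Measurable fun ω : ι → E =>
      S.indicator (1 : E × E → ℝ≥0∞) (ω j, ω k) * S.indicator 1 (ω j', ω k') :=
    fun j j' k k' => (hm j k).mul (hm j' k')
  have hmx : ∀ y, Measurable fun x => S.indicator (1 : E × E → ℝ≥0∞) (x, y) :=
    fun y => (measurable_one.indicator hS).comp (by fun_prop)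
  have hmy : ∀ x, Measurable fun y => S.indicator (1 : E × E → ℝ≥0∞) (x, y) :=
    fun x => (measurable_one.indicator hS).comp (by fun_prop)
  have hpair := lintegral_indicator_pair hS hR hPR hsub hq hjk
  have hRm : Measurable (R.indicator (1 : E → ℝ≥0∞)) := measurable_one.indicator hR
  have hsec : ∀ x, P {y | (x, y) ∈ S} ≤ R.indicator 1 x * q := by
    intro x
    by_cases hx : x ∈ R
    · simp [hx, hq]
    · have : {y | (x, y) ∈ S} = ∅ := by ext y; simpa using fun h => hx (hsub x y h)
      simp [this]
  by_cases hk : k = k'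
  · subst hk
    by_cases hj : j = j'
    · subst hj
      simp only [if_true]
      refine le_trans ?_ le_add_self
      rw [← hpair]
      refine lintegral_mono fun ω => ?_
      by_cases hω : (ω j, ω k) ∈ S <;> simp [hω]
    · simp only [if_true, hj, if_false, add_zero]
      refine le_trans ?_ le_add_self
      rw [lintegral_resample P j' (hmm j j' k k)]
      simp only [Function.update_self, Function.update_of_ne hj, Function.update_of_ne hj'k.symm]
      simp only [lintegral_const_mul _ (hmx _), lintegral_indicator_fst P hS]
      rw [← hpair, ← lintegral_mul_const _ (hm j k)]
      exact lintegral_mono fun ω => by gcongr; exact hq' _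
  · rw [lintegral_resample P k' (hmm j j' k k')]
    simp only [Function.update_self, Function.update_of_ne hk, Function.update_of_ne hjk',
      Function.update_of_ne hj'k']
    simp only [lintegral_const_mul _ (hmy _), lintegral_indicator_snd P hS]
    have hle : ∫⁻ ω : ι → E, S.indicator 1 (ω j, ω k) * P {y | (ω j', y) ∈ S}
        ∂(Measure.pi fun _ => P) ≤
        ∫⁻ ω : ι → E, S.indicator 1 (ω j, ω k) * (R.indicator 1 (ω j') * q)
        ∂(Measure.pi fun _ => P) :=
      lintegral_mono fun ω => by gcongr; exact hsec _
    refine hle.trans ?_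
    by_cases hj : j = j'
    · subst hj
      simp only [hk, if_true, if_false, add_zero]
      refine le_trans ?_ le_add_self
      rw [← hpair, ← lintegral_mul_const _ (hm j k)]
      refine lintegral_mono fun ω => ?_
      gcongr
      by_cases hω : ω j ∈ R <;> simp [hω]
    · simp only [hk, hj, if_false, add_zero]
      have hmR : Measurable fun ω : ι → E =>
          S.indicator (1 : E × E → ℝ≥0∞) (ω j, ω k) * (R.indicator 1 (ω j') * q) :=
        (hm j k).mul ((hRm.comp (measurable_pi_apply j')).mul_const q)
      rw [lintegral_resample P j' hmR]
      simp only [Function.update_self, Function.update_of_ne hj, Function.update_of_ne hj'k.symm]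
      simp only [lintegral_const_mul _ (hRm.mul_const q), lintegral_mul_const _ hRm,
        lintegral_indicator_one hR, hPR]
      rw [lintegral_mul_const _ (hm j k), hpair]

theorem lintegral_pairCount (hS : MeasurableSet S) (hR : MeasurableSet R)
    (hPR : P R = a) (hsub : ∀ x y, (x, y) ∈ S → x ∈ R)
    (hq : ∀ x ∈ R, P {y | (x, y) ∈ S} = q) {G₁ G₂ : Finset ι} (hG : Disjoint G₁ G₂) :
    ∫⁻ ω, pairCount G₁ G₂ S ω ∂(Measure.pi fun _ => P) = G₁.card * (G₂.card * (a * q)) := by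
  have hm := measurable_indicator_pair (ι := ι) hS
  simp only [pairCount]
  rw [lintegral_finsetSum _ fun j _ => Finset.measurable_fun_sum _ fun k _ => hm j k]
  simp_rw [lintegral_finsetSum _ fun k _ => hm _ k]
  rw [Finset.sum_congr rfl fun j hj => Finset.sum_congr rfl fun k hk =>
    lintegral_indicator_pair hS hR hPR hsub hq (hG.forall_ne_finset hj hk)]
  simp

theorem lintegral_pairCount_sq_le (hS : MeasurableSet S) (hR : MeasurableSet R)
    (hPR : P R = a) (hsub : ∀ x y, (x, y) ∈ S → x ∈ R)
    (hq : ∀ x ∈ R, P {y | (x, y) ∈ S} = q) (hq' : ∀ y, P {x | (x, y) ∈ S} ≤ 2 * q)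
    {G₁ G₂ : Finset ι} (hG : Disjoint G₁ G₂) :
    ∫⁻ ω, pairCount G₁ G₂ S ω ^ 2 ∂(Measure.pi fun _ => P) ≤
      G₁.card * (G₁.card * (G₂.card * (G₂.card * (a * q * (a * q))))) +
      G₁.card * (G₂.card * (G₂.card * (a * q * q))) +
      G₁.card * (G₁.card * (G₂.card * (a * q * (2 * q)))) +
      G₁.card * (G₂.card * (a * q)) := by
  have hm := measurable_indicator_pair (ι := ι) hS
  have hmm : ∀ j j' k k' : ι, Measurable fun ω : ι → E =>
      S.indicator (1 : E × E → ℝ≥0∞) (ω j, ω k) * S.indicator 1 (ω j', ω k') :=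
    fun j j' k k' => (hm j k).mul (hm j' k')
  simp only [pairCount, sq, Finset.sum_mul_sum]
  rw [lintegral_finsetSum _ fun j _ => Finset.measurable_fun_sum _ fun j' _ =>
    Finset.measurable_fun_sum _ fun k _ => Finset.measurable_fun_sum _ fun k' _ => hmm j j' k k']
  simp_rw [lintegral_finsetSum _ fun j' _ => Finset.measurable_fun_sum _ fun k _ =>
    Finset.measurable_fun_sum _ fun k' _ => hmm _ j' k k']
  simp_rw [lintegral_finsetSum _ fun k _ => Finset.measurable_fun_sum _ fun k' _ => hmm _ _ k k',
    lintegral_finsetSum _ fun k' _ => hmm _ _ _ k']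
  refine (Finset.sum_le_sum fun j hj => Finset.sum_le_sum fun j' hj' => Finset.sum_le_sum
    fun k hk => Finset.sum_le_sum fun k' hk' => lintegral_indicator_pair_mul_le hS hR hPR hsub hq hq'
      (hG.forall_ne_finset hj hk) (hG.forall_ne_finset hj hk')
      (hG.forall_ne_finset hj' hk) (hG.forall_ne_finset hj' hk')).trans ?_
  simp only [Finset.sum_add_distrib, Finset.sum_const, nsmul_eq_mul, Finset.sum_ite_eq,
    Finset.sum_ite_irrel, mul_ite, mul_zero, Finset.sum_ite_mem,
    Finset.inter_self, le_refl]

theorem lintegral_tripleCount_le {T : Set ((E × E) × E)} (hS : MeasurableSet S)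
    (hR : MeasurableSet R) (hPR : P R = a) (hsub : ∀ x y, (x, y) ∈ S → x ∈ R)
    (hq : ∀ x ∈ R, P {y | (x, y) ∈ S} = q) (hT : MeasurableSet T)
    (hTS : ∀ z w, (z, w) ∈ T → z ∈ S) {u : ℝ≥0∞} (hu : ∀ z ∈ S, P {w | (z, w) ∈ T} ≤ u)
    {G₁ G₂ : Finset ι} (hG : Disjoint G₁ G₂) :
    ∫⁻ ω, tripleCount G₁ G₂ T ω ∂(Measure.pi fun _ => P) ≤
      G₁.card * (G₂.card * (Fintype.card ι * (a * q * u))) := by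
  have hm := measurable_indicator_pair (ι := ι) hS
  have hmT : ∀ j k l : ι, Measurable fun ω : ι → E =>
      T.indicator (1 : (E × E) × E → ℝ≥0∞) ((ω j, ω k), ω l) :=
    fun j k l => (measurable_one.indicator hT).comp (by fun_prop)
  simp only [tripleCount]
  rw [lintegral_finsetSum _ fun j _ => Finset.measurable_fun_sum _ fun k _ =>
    Finset.measurable_fun_sum _ fun l _ => hmT j k l]
  simp_rw [lintegral_finsetSum _ fun k _ => Finset.measurable_fun_sum _ fun l _ => hmT _ k l,
    lintegral_finsetSum _ fun l _ => hmT _ _ l]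
  have hterm : ∀ j ∈ G₁, ∀ k ∈ G₂, ∀ l ∈ ({l : ι | l ≠ j ∧ l ≠ k} : Finset ι),
      ∫⁻ ω : ι → E, T.indicator (1 : (E × E) × E → ℝ≥0∞) ((ω j, ω k), ω l)
        ∂(Measure.pi fun _ => P) ≤ a * q * u := by
    intro j hj k hk l hl
    obtain ⟨hlj, hlk⟩ := (Finset.mem_filter.1 hl).2
    rw [lintegral_resample P l (hmT j k l)]
    simp only [Function.update_self, Function.update_of_ne hlj.symm, Function.update_of_ne hlk.symm]
    simp only [lintegral_indicator_snd P hT]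
    rw [← lintegral_indicator_pair hS hR hPR hsub hq
      (hG.forall_ne_finset hj hk), ← lintegral_mul_const _ (hm j k)]
    refine lintegral_mono fun ω => ?_
    by_cases hω : (ω j, ω k) ∈ S
    · simpa [hω] using hu _ hω
    · have : {w | ((ω j, ω k), w) ∈ T} = ∅ := by ext w; simpa using fun h => hω (hTS _ w h)
      simp [this]
  have hl : ∀ j ∈ G₁, ∀ k ∈ G₂, ∑ l ∈ {l : ι | l ≠ j ∧ l ≠ k},
      ∫⁻ ω : ι → E, T.indicator (1 : (E × E) × E → ℝ≥0∞) ((ω j, ω k), ω l)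
        ∂(Measure.pi fun _ => P) ≤ Fintype.card ι * (a * q * u) := by
    intro j hj k hk
    refine (Finset.sum_le_sum fun l hl => hterm j hj k hk l hl).trans ?_
    rw [Finset.sum_const, nsmul_eq_mul]
    gcongr
    exact Finset.card_le_univ _
  refine (Finset.sum_le_sum fun j hj => Finset.sum_le_sum fun k hk => hl j hj k hk).trans ?_
  simp

end Pairs

/-- If no pair from `G₁ × G₂` in `S` escapes having a third point in `T`, then the number of such
pairs is far below its mean or the number of such triples is far above its mean. -/
theorem measure_all_pairs_blocked_le {ι E : Type*} [Fintype ι] [DecidableEq ι]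
    [MeasurableSpace E] {P : Measure E} [IsProbabilityMeasure P] {S : Set (E × E)} {R : Set E}
    {T : Set ((E × E) × E)} {a q u : ℝ} (ha : 0 < a) (hq0 : 0 < q) (hu0 : 0 ≤ u)
    (hS : MeasurableSet S) (hR : MeasurableSet R) (hPR : P R = ENNReal.ofReal a)
    (hsub : ∀ x y, (x, y) ∈ S → x ∈ R)
    (hq : ∀ x ∈ R, P {y | (x, y) ∈ S} = ENNReal.ofReal q)
    (hq' : ∀ y, P {x | (x, y) ∈ S} ≤ ENNReal.ofReal (2 * q))
    (hT : MeasurableSet T) (hTS : ∀ z w, (z, w) ∈ T → z ∈ S)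
    (hu : ∀ z ∈ S, P {w | (z, w) ∈ T} ≤ ENNReal.ofReal u)
    {G₁ G₂ : Finset ι} (hG : Disjoint G₁ G₂) {m : ℕ} (hm : 0 < m) (hG₁ : G₁.card = m)
    (hG₂ : G₂.card = m) :
    (Measure.pi fun _ : ι => P) {ω | ∀ j ∈ G₁, ∀ k ∈ G₂, (ω j, ω k) ∈ S →
        ∃ l, l ≠ j ∧ l ≠ k ∧ ((ω j, ω k), ω l) ∈ T} ≤
      ENNReal.ofReal (4 * (3 / (m * a) + 1 / (m ^ 2 * (a * q))) + 2 * Fintype.card ι * u) := by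
  have hm' : (0 : ℝ) < m := by exact_mod_cast hm
  have h2q : ENNReal.ofReal (2 * q) = 2 * ENNReal.ofReal q := by
    rw [ENNReal.ofReal_mul (by norm_num)]; simp
  rw [h2q] at hq'
  have hcast : ((m : ℕ) : ℝ≥0∞) = ENNReal.ofReal m := (ENNReal.ofReal_natCast m).symm
  have hM : 0 < m ^ 2 * (a * q) := by positivity
  have h1 : ∫⁻ ω, pairCount G₁ G₂ S ω ∂(Measure.pi fun _ => P) =
      ENNReal.ofReal (m ^ 2 * (a * q)) := by
    rw [lintegral_pairCount hS hR hPR hsub hq hG, hG₁, hG₂, hcast, ← ENNReal.ofReal_mul ha.le,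
      ← ENNReal.ofReal_mul hm'.le, ← ENNReal.ofReal_mul hm'.le]
    congr 1; ring
  have h2 : ∫⁻ ω, pairCount G₁ G₂ S ω ^ 2 ∂(Measure.pi fun _ => P) ≤
      ENNReal.ofReal ((1 + (3 / (m * a) + 1 / (m ^ 2 * (a * q)))) * (m ^ 2 * (a * q)) ^ 2) := by
    refine (lintegral_pairCount_sq_le hS hR hPR hsub hq hq' hG).trans ?_
    rw [hG₁, hG₂, hcast, ← h2q]
    repeat rw [← ENNReal.ofReal_mul (by positivity)]
    repeat rw [← ENNReal.ofReal_add (by positivity) (by positivity)]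
    refine ENNReal.ofReal_le_ofReal (le_of_eq ?_)
    field_simp
    ring
  have hX := measure_abs_sub_le_of_second_moment (μ := Measure.pi fun _ : ι => P)
    (measurable_pairCount hS G₁ G₂) hM (by positivity) h1 h2
  have hmT : Measurable (tripleCount G₁ G₂ T) :=
    Finset.measurable_fun_sum _ fun j _ => Finset.measurable_fun_sum _ fun k _ =>
      Finset.measurable_fun_sum _ fun l _ => (measurable_one.indicator hT).comp (by fun_prop)
  have hY : (Measure.pi fun _ : ι => P)
      {ω | ENNReal.ofReal (m ^ 2 * (a * q) / 2) ≤ tripleCount G₁ G₂ T ω} ≤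
        ENNReal.ofReal (2 * Fintype.card ι * u) := by
    refine (meas_ge_le_lintegral_div hmT.aemeasurable (by simpa using hM)
      ENNReal.ofReal_ne_top).trans ?_
    refine ENNReal.div_le_of_le_mul ?_
    refine (lintegral_tripleCount_le hS hR hPR hsub hq hT hTS hu hG).trans ?_
    rw [hG₁, hG₂, hcast, ← ENNReal.ofReal_natCast (Fintype.card ι)]
    repeat rw [← ENNReal.ofReal_mul (by positivity)]
    refine ENNReal.ofReal_le_ofReal (le_of_eq ?_)
    ring
  rw [ENNReal.ofReal_add (by positivity) (by positivity)]
  refine le_trans (measure_mono fun ω hω => ?_) ((measure_union_le _ _).trans (add_le_add hX hY))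
  have hXY : pairCount G₁ G₂ S ω ≤ tripleCount G₁ G₂ T ω := by
    refine Finset.sum_le_sum fun j hj => Finset.sum_le_sum fun k hk => ?_
    by_cases h : (ω j, ω k) ∈ S
    · obtain ⟨l, hlj, hlk, hl⟩ := hω j hj k hk h
      refine le_trans ?_ (Finset.single_le_sum (f := fun l => T.indicator 1 ((ω j, ω k), ω l))
        (fun _ _ => zero_le) (Finset.mem_filter.2 ⟨Finset.mem_univ l, hlj, hlk⟩))
      simp [h, hl]
    · simp [h]
  by_cases hlt : ENNReal.ofReal (m ^ 2 * (a * q) / 2) ≤ tripleCount G₁ G₂ T ω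
  · exact Or.inr hlt
  · left
    have hXlt := hXY.trans_lt (not_le.1 hlt)
    have := (ENNReal.lt_ofReal_iff_toReal_lt hXlt.ne_top).1 hXlt
    rw [mem_ofPred_eq, abs_sub_comm]
    refine le_trans ?_ (le_abs_self _)
    linarith

section PlanarMeasure

theorem volume_plane_eq {T : Set (ℝ × ℝ)} (hT : MeasurableSet T) :
    volume {p : Plane | (p 0, p 1) ∈ T} = volume T := by
  have h := (volume_preserving_finTwoArrow ℝ).comp
    (EuclideanSpace.volume_preserving_symm_measurableEquiv_toLp (Fin 2))
  rw [← h.measure_preimage hT.nullMeasurableSet]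
  rfl

theorem volume_eq_mul_of_slices {T : Set (ℝ × ℝ)} (hT : MeasurableSet T) {I : Set ℝ}
    (hI : MeasurableSet I) {c : ℝ≥0∞} (hTI : ∀ z ∈ T, z.1 ∈ I)
    (hc : ∀ x ∈ I, volume {y | (x, y) ∈ T} = c) : volume T = c * volume I := by
  rw [Measure.volume_eq_prod, Measure.prod_apply hT, ← lintegral_indicator_const hI]
  refine lintegral_congr fun x => ?_
  by_cases hx : x ∈ I
  · rw [indicator_of_mem hx]; exact hc x hx
  · have : Prod.mk x ⁻¹' T = ∅ := by ext y; simpa using fun h => hx (hTI _ h)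
    simp [hx, this]

theorem volume_le_mul_of_slices {T : Set (ℝ × ℝ)} (hT : MeasurableSet T) {I : Set ℝ}
    (hI : MeasurableSet I) {c : ℝ≥0∞} (hTI : ∀ z ∈ T, z.1 ∈ I)
    (hc : ∀ x ∈ I, volume {y | (x, y) ∈ T} ≤ c) : volume T ≤ c * volume I := by
  rw [Measure.volume_eq_prod, Measure.prod_apply hT, ← lintegral_indicator_const hI]
  refine lintegral_mono fun x => ?_
  by_cases hx : x ∈ I
  · rw [indicator_of_mem hx]; exact hc x hx
  · have : Prod.mk x ⁻¹' T = ∅ := by ext y; simpa using fun h => hx (hTI _ h)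
    simp [hx, this]

theorem volume_preimage_shear {T : Set (ℝ × ℝ)} (hT : MeasurableSet T) (m v₀ v₁ : ℝ) :
    volume {z : ℝ × ℝ | (z.1 - v₀ + m * (z.2 - v₁), z.2 - v₁) ∈ T} = volume T := by
  have hm : Measurable fun z : ℝ × ℝ => (z.1 - v₀ + m * (z.2 - v₁), z.2 - v₁) := by fun_prop
  have hT' : MeasurableSet {z : ℝ × ℝ | (z.1 - v₀ + m * (z.2 - v₁), z.2 - v₁) ∈ T} := hm hT
  rw [Measure.volume_eq_prod, Measure.prod_apply_symm hT', Measure.prod_apply_symm hT]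
  rw [← lintegral_sub_right_eq_self (fun y => volume ((fun x => (x, y)) ⁻¹' T)) v₁]
  refine lintegral_congr fun y => ?_
  rw [← measure_preimage_add_right volume (-v₀ + m * (y - v₁)) ((fun x => (x, y - v₁)) ⁻¹' T)]
  congr 1
  ext x
  simp only [mem_preimage, mem_ofPred_eq]
  ring_nf

theorem volume_square {ℓ : ℝ} (hℓ : 0 ≤ ℓ) : volume (square ℓ) = ENNReal.ofReal (ℓ ^ 2) := by
  have h := volume_plane_eq (measurableSet_Icc.prod measurableSet_Icc :
    MeasurableSet (Icc 0 ℓ ×ˢ Icc 0 ℓ))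
  rw [Measure.volume_eq_prod, Measure.prod_prod, Real.volume_Icc,
    ← ENNReal.ofReal_mul (by linarith)] at h
  rw [show ℓ ^ 2 = (ℓ - 0) * (ℓ - 0) by ring]
  exact h

theorem isClosed_square (ℓ : ℝ) : IsClosed (square ℓ) := by
  unfold square
  exact (isClosed_Icc.preimage (by fun_prop : Continuous fun p : Plane => p 0)).inter
    (isClosed_Icc.preimage (by fun_prop : Continuous fun p : Plane => p 1))

theorem isProbabilityMeasure_unifSq {ℓ : ℝ} (hℓ : 0 < ℓ) : IsProbabilityMeasure (unifSq ℓ) := by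
  constructor
  have h : volume (square ℓ) ≠ 0 := by rw [volume_square hℓ.le]; simpa using by positivity
  have h' : volume (square ℓ) ≠ ∞ := by rw [volume_square hℓ.le]; simp
  simp [unifSq, ENNReal.inv_mul_cancel h h']

theorem unifSq_apply {ℓ : ℝ} {S : Set Plane} (hS : MeasurableSet S) :
    unifSq ℓ S = volume (S ∩ square ℓ) / volume (square ℓ) := by
  simp [unifSq, Measure.restrict_apply hS, ENNReal.div_eq_inv_mul]

theorem unifSq_eq_of_subset {ℓ c : ℝ} (hℓ : 0 < ℓ) {S : Set Plane} (hS : MeasurableSet S)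
    (hsub : S ⊆ square ℓ) (hc : volume S = ENNReal.ofReal c) :
    unifSq ℓ S = ENNReal.ofReal (c / ℓ ^ 2) := by
  rw [unifSq_apply hS, inter_eq_self_of_subset_left hsub, hc, volume_square hℓ.le,
    ENNReal.ofReal_div_of_pos (by positivity)]

theorem unifSq_le {ℓ c : ℝ} (hℓ : 0 < ℓ) {S : Set Plane} (hS : MeasurableSet S)
    (hc : volume S ≤ ENNReal.ofReal c) : unifSq ℓ S ≤ ENNReal.ofReal (c / ℓ ^ 2) := by
  rw [unifSq_apply hS, volume_square hℓ.le, ENNReal.ofReal_div_of_pos (by positivity)]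
  gcongr
  exact (measure_mono inter_subset_left).trans hc

end PlanarMeasure

section Geometry

/-- A box to the right of `v`, at distance of order `s`. -/
def rightBox (v : Plane) (s : ℝ) : Set Plane :=
  {x | x 0 - v 0 ∈ Icc (s / 2) s ∧ x 1 - v 1 ∈ Icc 0 (s / 2)}

/-- Pairs of points at distance of order `s` from `v`, in directions from `v` that are opposite
up to an angle of order `s`. -/
def oppositePairs (v : Plane) (s : ℝ) : Set (Plane × Plane) :=
  {z | z.1 ∈ rightBox v s ∧ z.2 0 - v 0 ∈ Icc (-s) (-(s / 2)) ∧
    |(z.2 1 - v 1) * (z.1 0 - v 0) - (z.1 1 - v 1) * (z.2 0 - v 0)| ≤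
      s ^ 2 / 4 * (z.1 0 - v 0)}

/-- Triples consisting of an opposite pair around `v` and a point of the unit disk around `v`
not covered by the unit disks around that pair. -/
def uncoveredTriples (v : Plane) (s : ℝ) : Set ((Plane × Plane) × Plane) :=
  {z | z.1 ∈ oppositePairs v s ∧ dist v z.2 ≤ 1 ∧ 1 < dist z.1.1 z.2 ∧ 1 < dist z.1.2 z.2}

theorem measurableSet_rightBox (v : Plane) (s : ℝ) : MeasurableSet (rightBox v s) :=
  ((isClosed_Icc.preimage (by fun_prop : Continuous fun p : Plane => p 0 - v 0)).inter
    (isClosed_Icc.preimage (by fun_prop : Continuous fun p : Plane => p 1 - v 1))).measurableSet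

theorem measurableSet_oppositePairs (v : Plane) (s : ℝ) :
    MeasurableSet (oppositePairs v s) := by
  have h : MeasurableSet {z : Plane × Plane |
      |(z.2 1 - v 1) * (z.1 0 - v 0) - (z.1 1 - v 1) * (z.2 0 - v 0)| ≤
        s ^ 2 / 4 * (z.1 0 - v 0)} := measurableSet_le (by fun_prop) (by fun_prop)
  exact ((measurableSet_rightBox v s).preimage measurable_fst).inter
    ((measurableSet_Icc.preimage
      (by fun_prop : Measurable fun z : Plane × Plane => z.2 0 - v 0)).inter h)

theorem measurableSet_uncoveredTriples (v : Plane) (s : ℝ) :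
    MeasurableSet (uncoveredTriples v s) := by
  have h : MeasurableSet {z : (Plane × Plane) × Plane | dist v z.2 ≤ 1} :=
    measurableSet_le (by fun_prop) (by fun_prop)
  have h₁ : MeasurableSet {z : (Plane × Plane) × Plane | 1 < dist z.1.1 z.2} :=
    measurableSet_lt (by fun_prop) (by fun_prop)
  have h₂ : MeasurableSet {z : (Plane × Plane) × Plane | 1 < dist z.1.2 z.2} :=
    measurableSet_lt (by fun_prop) (by fun_prop)
  exact ((measurableSet_oppositePairs v s).preimage measurable_fst).inter (h.inter (h₁.inter h₂))

theorem volume_rightBox (v : Plane) {s : ℝ} (hs : 0 ≤ s) :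
    volume (rightBox v s) = ENNReal.ofReal (s ^ 2 / 4) := by
  have h := volume_plane_eq (measurableSet_Icc.prod measurableSet_Icc :
    MeasurableSet (Icc (v 0 + s / 2) (v 0 + s) ×ˢ Icc (v 1) (v 1 + s / 2)))
  rw [Measure.volume_eq_prod, Measure.prod_prod, Real.volume_Icc, Real.volume_Icc,
    ← ENNReal.ofReal_mul (by linarith)] at h
  rw [show s ^ 2 / 4 = (v 0 + s - (v 0 + s / 2)) * (v 1 + s / 2 - v 1) by ring, ← h]
  congr 1
  ext p
  simp only [rightBox, mem_ofPred_eq, mem_prod, mem_Icc]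
  constructor <;> rintro ⟨⟨_, _⟩, _, _⟩ <;> refine ⟨⟨?_, ?_⟩, ?_, ?_⟩ <;> linarith

theorem abs_le_mul_iff_mem_Icc {x₀ x₁ y₀ y e : ℝ} (hx : 0 < x₀) :
    |y * x₀ - x₁ * y₀| ≤ e * x₀ ↔ y ∈ Icc (x₁ / x₀ * y₀ - e) (x₁ / x₀ * y₀ + e) := by
  have : y * x₀ - x₁ * y₀ = (y - x₁ / x₀ * y₀) * x₀ := by field_simp
  rw [this, abs_mul, abs_of_pos hx, mul_le_mul_iff_left₀ hx, abs_le, mem_Icc]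
  constructor <;> rintro ⟨_, _⟩ <;> constructor <;> linarith

theorem volume_oppositePairs_snd (v : Plane) {s : ℝ} (hs : 0 < s) {x : Plane}
    (hx : x ∈ rightBox v s) :
    volume {y | (x, y) ∈ oppositePairs v s} = ENNReal.ofReal (s ^ 3 / 4) := by
  have hx0 : 0 < x 0 - v 0 := by linarith [hx.1.1]
  let T : Set (ℝ × ℝ) := {z | z.1 - v 0 ∈ Icc (-s) (-(s / 2)) ∧
    |(z.2 - v 1) * (x 0 - v 0) - (x 1 - v 1) * (z.1 - v 0)| ≤ s ^ 2 / 4 * (x 0 - v 0)}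
  have hle : MeasurableSet {z : ℝ × ℝ |
      |(z.2 - v 1) * (x 0 - v 0) - (x 1 - v 1) * (z.1 - v 0)| ≤ s ^ 2 / 4 * (x 0 - v 0)} :=
    measurableSet_le (by fun_prop) (by fun_prop)
  have hT : MeasurableSet T := (measurableSet_Icc.preimage
    (by fun_prop : Measurable fun z : ℝ × ℝ => z.1 - v 0)).inter hle
  have hset : {y | (x, y) ∈ oppositePairs v s} = {y : Plane | (y 0, y 1) ∈ T} := by
    ext y
    exact and_iff_right hx
  rw [hset, volume_plane_eq hT, volume_eq_mul_of_slices hT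
    (measurableSet_Icc : MeasurableSet (Icc (v 0 - s) (v 0 - s / 2)))
    (c := ENNReal.ofReal (s ^ 2 / 2)), Real.volume_Icc, ← ENNReal.ofReal_mul (by positivity)]
  · congr 1; ring
  · intro z hz
    exact ⟨by linarith [hz.1.1], by linarith [hz.1.2]⟩
  · intro t ht
    have : {y | (t, y) ∈ T} = Icc (v 1 + ((x 1 - v 1) / (x 0 - v 0) * (t - v 0) - s ^ 2 / 4))
        (v 1 + ((x 1 - v 1) / (x 0 - v 0) * (t - v 0) + s ^ 2 / 4)) := by
      ext y
      have h1 : t - v 0 ∈ Icc (-s) (-(s / 2)) := ⟨by linarith [ht.1], by linarith [ht.2]⟩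
      refine (and_iff_right h1).trans ((abs_le_mul_iff_mem_Icc hx0).trans ?_)
      simp only [mem_Icc]
      constructor <;> rintro ⟨_, _⟩ <;> constructor <;> linarith
    rw [this, Real.volume_Icc]
    congr 1; ring

theorem volume_oppositePairs_fst (v : Plane) {s : ℝ} (hs : 0 < s) (y : Plane) :
    volume {x | (x, y) ∈ oppositePairs v s} ≤ ENNReal.ofReal (s ^ 3 / 2) := by
  by_cases hy : y 0 - v 0 ∈ Icc (-s) (-(s / 2))
  swap
  · have : {x | (x, y) ∈ oppositePairs v s} = ∅ := by
      ext x
      simpa using fun h : (x, y) ∈ oppositePairs v s => hy h.2.1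
    simp [this]
  have hy0 : 0 < -(y 0 - v 0) := by linarith [hy.2]
  let T : Set (ℝ × ℝ) := {z | z.1 - v 0 ∈ Icc (s / 2) s ∧
    |(y 1 - v 1) * (z.1 - v 0) - (z.2 - v 1) * (y 0 - v 0)| ≤ s ^ 2 / 4 * (z.1 - v 0)}
  have hle : MeasurableSet {z : ℝ × ℝ |
      |(y 1 - v 1) * (z.1 - v 0) - (z.2 - v 1) * (y 0 - v 0)| ≤ s ^ 2 / 4 * (z.1 - v 0)} :=
    measurableSet_le (by fun_prop) (by fun_prop)
  have hT : MeasurableSet T := (measurableSet_Icc.preimage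
    (by fun_prop : Measurable fun z : ℝ × ℝ => z.1 - v 0)).inter hle
  have hset : {x | (x, y) ∈ oppositePairs v s} ⊆ {x : Plane | (x 0, x 1) ∈ T} :=
    fun x hx => ⟨hx.1.1, hx.2.2⟩
  refine (measure_mono hset).trans ?_
  rw [volume_plane_eq hT]
  refine (volume_le_mul_of_slices hT
    (measurableSet_Icc : MeasurableSet (Icc (v 0 + s / 2) (v 0 + s)))
    (c := ENNReal.ofReal (s ^ 2)) ?_ ?_).trans (le_of_eq ?_)
  · intro z hz
    exact ⟨by linarith [hz.1.1], by linarith [hz.1.2]⟩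
  · intro t ht
    have hsub : {x | (t, x) ∈ T} ⊆
        Icc (v 1 + (-(y 1 - v 1) / -(y 0 - v 0) * (t - v 0) - s ^ 2 / 2))
        (v 1 + (-(y 1 - v 1) / -(y 0 - v 0) * (t - v 0) + s ^ 2 / 2)) := by
      intro x hx
      have h2 : |(x - v 1) * (-(y 0 - v 0)) - (-(y 1 - v 1)) * (t - v 0)| ≤
          s ^ 2 / 2 * (-(y 0 - v 0)) := by
        have h3 := hx.2
        simp only at h3
        rw [show (x - v 1) * (-(y 0 - v 0)) - (-(y 1 - v 1)) * (t - v 0) =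
          (y 1 - v 1) * (t - v 0) - (x - v 1) * (y 0 - v 0) by ring]
        refine h3.trans ?_
        nlinarith [hx.1.2, hy.2, sq_nonneg s]
      have := (abs_le_mul_iff_mem_Icc hy0).1 h2
      exact ⟨by linarith [this.1], by linarith [this.2]⟩
    refine (measure_mono hsub).trans (le_of_eq ?_)
    rw [Real.volume_Icc]
    congr 1; ring
  · rw [Real.volume_Icc, ← ENNReal.ofReal_mul (by positivity)]
    congr 1; ring

theorem plane_dist_le_iff (p w : Plane) {r : ℝ} (hr : 0 ≤ r) :
    dist p w ≤ r ↔ (p 0 - w 0) ^ 2 + (p 1 - w 1) ^ 2 ≤ r ^ 2 := by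
  rw [EuclideanSpace.dist_eq, Real.sqrt_le_left hr]
  simp [Fin.sum_univ_two, Real.dist_eq, sq_abs]

theorem volume_sq_mem_Icc_le {A c δ : ℝ} (hA : 1 / 4 ≤ A) (hδ : 0 ≤ δ) :
    volume {z : ℝ | A - δ ≤ (z - c) ^ 2 ∧ (z - c) ^ 2 ≤ A} ≤ ENNReal.ofReal (4 * δ) := by
  have hB : 1 / 2 ≤ √A := Real.le_sqrt_of_sq_le (by linarith)
  have hBA : √A ^ 2 = A := Real.sq_sqrt (by linarith)
  have hsub : {z : ℝ | A - δ ≤ (z - c) ^ 2 ∧ (z - c) ^ 2 ≤ A} ⊆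
      Icc (c + √A - 2 * δ) (c + √A) ∪ Icc (c - √A) (c - √A + 2 * δ) := by
    rintro z ⟨h1, h2⟩
    obtain ⟨h3, h4⟩ := abs_le.1 (Real.abs_le_sqrt h2)
    rcases le_total 0 (z - c) with h | h
    · refine Or.inl ⟨?_, by linarith⟩
      nlinarith
    · refine Or.inr ⟨by linarith, ?_⟩
      nlinarith
  refine (measure_mono hsub).trans ((measure_union_le _ _).trans (le_of_eq ?_))
  rw [Real.volume_Icc, Real.volume_Icc, ← ENNReal.ofReal_add (by linarith) (by linarith)]
  congr 1; ring

theorem volume_sheared_arcs_le {m s : ℝ} (hm0 : 0 ≤ m) (hm1 : m ≤ 1) (hs : 0 < s)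
    (hs8 : s ≤ 1 / 8) :
    volume {z : ℝ × ℝ | z.1 ∈ Icc (-(4 * s)) (4 * s) ∧
      1 - 4 * s ^ 2 ≤ (z.1 - m * z.2) ^ 2 + z.2 ^ 2 ∧ (z.1 - m * z.2) ^ 2 + z.2 ^ 2 ≤ 1} ≤
      ENNReal.ofReal (128 * s ^ 3) := by
  have h₁ : MeasurableSet {z : ℝ × ℝ | 1 - 4 * s ^ 2 ≤ (z.1 - m * z.2) ^ 2 + z.2 ^ 2} :=
    measurableSet_le (by fun_prop) (by fun_prop)
  have h₂ : MeasurableSet {z : ℝ × ℝ | (z.1 - m * z.2) ^ 2 + z.2 ^ 2 ≤ 1} :=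
    measurableSet_le (by fun_prop) (by fun_prop)
  refine (volume_le_mul_of_slices ((measurableSet_Icc.preimage measurable_fst).inter (h₁.inter h₂))
    (measurableSet_Icc : MeasurableSet (Icc (-(4 * s)) (4 * s)))
    (c := ENNReal.ofReal (4 * (4 * s ^ 2))) (fun z hz => hz.1) ?_).trans (le_of_eq ?_)
  · intro t ht
    have hk : 1 ≤ 1 + m ^ 2 := by nlinarith
    have hk2 : 1 + m ^ 2 ≤ 2 := by nlinarith
    have hid : ∀ z : ℝ, (t - m * z) ^ 2 + z ^ 2 =
        (1 + m ^ 2) * (z - m * t / (1 + m ^ 2)) ^ 2 + t ^ 2 / (1 + m ^ 2) := by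
      intro z; field_simp; ring
    have ht2 : t ^ 2 / (1 + m ^ 2) ≤ 1 / 4 := by
      rw [div_le_iff₀ (by linarith)]
      nlinarith [ht.1, ht.2]
    refine le_trans (measure_mono ?_)
      (volume_sq_mem_Icc_le (A := (1 - t ^ 2 / (1 + m ^ 2)) / (1 + m ^ 2))
        (c := m * t / (1 + m ^ 2)) ?_ (by positivity))
    · rintro z ⟨-, h1, h2⟩
      simp only [mem_ofPred_eq] at h1 h2
      rw [hid] at h1 h2
      constructor
      · rw [sub_le_iff_le_add, div_le_iff₀ (by linarith)]
        nlinarith [sq_nonneg s]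
      · rw [le_div_iff₀ (by linarith)]
        linarith
    · rw [le_div_iff₀ (by linarith)]
      linarith
  · rw [Real.volume_Icc, ← ENNReal.ofReal_mul (by positivity)]
    congr 1; ring

theorem uncovered_point_mem_arcs {s x₀ x₁ y₀ y₁ p₀ p₁ : ℝ} (hs : 0 < s) (hs8 : s ≤ 1 / 8)
    (hx₀ : x₀ ∈ Icc (s / 2) s) (hx₁ : x₁ ∈ Icc 0 (s / 2)) (hy₀ : y₀ ∈ Icc (-s) (-(s / 2)))
    (hy₁ : |y₁ * x₀ - x₁ * y₀| ≤ s ^ 2 / 4 * x₀) (hp : p₀ ^ 2 + p₁ ^ 2 ≤ 1)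
    (hpx : 1 < (x₀ - p₀) ^ 2 + (x₁ - p₁) ^ 2) (hpy : 1 < (y₀ - p₀) ^ 2 + (y₁ - p₁) ^ 2) :
    p₀ + x₁ / x₀ * p₁ ∈ Icc (-(4 * s)) (4 * s) ∧ 1 - 4 * s ^ 2 ≤ p₀ ^ 2 + p₁ ^ 2 := by
  obtain ⟨hx₀l, hx₀u⟩ := hx₀
  obtain ⟨hx₁l, hx₁u⟩ := hx₁
  obtain ⟨hy₀l, hy₀u⟩ := hy₀
  have hx₀p : 0 < x₀ := by linarith
  set m := x₁ / x₀ with hmdef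
  have hx₁m : x₁ = m * x₀ := by rw [hmdef]; field_simp
  have hm0 : 0 ≤ m := div_nonneg hx₁l hx₀p.le
  have hm1 : m ≤ 1 := (div_le_one hx₀p).2 (by linarith)
  obtain ⟨hel, heu⟩ := (abs_le_mul_iff_mem_Icc hx₀p).1 hy₁
  rw [← hmdef] at hel heu
  have hp₁ : p₁ ∈ Icc (-1) 1 := abs_le.1 (by
    rw [← sq_le_one_iff_abs_le_one]; nlinarith [sq_nonneg p₀])
  have hX : x₀ ^ 2 + x₁ ^ 2 ≤ 5 / 4 * s ^ 2 := by nlinarith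
  have hy₁b : |y₁| ≤ 5 / 4 * s := by
    rw [abs_le]; constructor <;> nlinarith
  have hY : y₀ ^ 2 + y₁ ^ 2 ≤ 21 / 8 * s ^ 2 := by
    have := sq_le_sq' (abs_le.1 hy₁b).1 (abs_le.1 hy₁b).2
    nlinarith
  obtain ⟨e, he⟩ : ∃ e, e = y₁ - m * y₀ := ⟨_, rfl⟩
  have hpe : |p₁ * e| ≤ s ^ 2 / 4 := by
    rw [abs_mul]
    have h1 : |p₁| ≤ 1 := abs_le.2 hp₁
    have h2 : |e| ≤ s ^ 2 / 4 := abs_le.2 ⟨by linarith, by linarith⟩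
    calc |p₁| * |e| ≤ 1 * (s ^ 2 / 4) := by gcongr
      _ = _ := one_mul _
  obtain ⟨hpel, hpeu⟩ := abs_le.1 hpe
  obtain ⟨t, ht⟩ : ∃ t, t = p₀ + m * p₁ := ⟨_, rfl⟩
  have hxt : 2 * (x₀ * t) < p₀ ^ 2 + p₁ ^ 2 - 1 + 5 / 4 * s ^ 2 := by
    have h1 : x₀ * t = x₀ * p₀ + x₁ * p₁ := by rw [ht, hx₁m]; ring
    have h2 : (x₀ - p₀) ^ 2 + (x₁ - p₁) ^ 2 =
      (x₀ ^ 2 + x₁ ^ 2) - 2 * (x₀ * p₀ + x₁ * p₁) + (p₀ ^ 2 + p₁ ^ 2) := by ring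
    linarith
  have hyt : 2 * (y₀ * t) < p₀ ^ 2 + p₁ ^ 2 - 1 + 25 / 8 * s ^ 2 := by
    have h1 : y₀ * t = y₀ * p₀ + y₁ * p₁ - p₁ * e := by rw [ht, he]; ring
    have h2 : (y₀ - p₀) ^ 2 + (y₁ - p₁) ^ 2 =
      (y₀ ^ 2 + y₁ ^ 2) - 2 * (y₀ * p₀ + y₁ * p₁) + (p₀ ^ 2 + p₁ ^ 2) := by ring
    linarith
  have hs2 : 0 < s ^ 2 := by positivity
  rw [← ht]
  refine ⟨⟨?_, ?_⟩, ?_⟩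
  · by_contra! h
    have : s / 2 * (4 * s) ≤ -y₀ * -t :=
      mul_le_mul (by linarith) (by linarith) (by linarith) (by linarith)
    linarith
  · by_contra! h
    have : s / 2 * (4 * s) ≤ x₀ * t :=
      mul_le_mul (by linarith) (by linarith) (by linarith) (by linarith)
    linarith
  · rcases le_total 0 t with h | h
    · linarith [mul_nonneg hx₀p.le h]
    · linarith [mul_nonneg_of_nonpos_of_nonpos (by linarith : y₀ ≤ 0) h]

theorem volume_uncovered_le_s11 (v : Plane) {s : ℝ} (hs : 0 < s) (hs8 : s ≤ 1 / 8)
    {z : Plane × Plane} (hz : z ∈ oppositePairs v s) :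
    volume {w | (z, w) ∈ uncoveredTriples v s} ≤ ENNReal.ofReal (128 * s ^ 3) := by
  obtain ⟨x, y⟩ := z
  obtain ⟨⟨hx₀, hx₁⟩, hy₀, hy₁⟩ := hz
  simp only at hx₀ hx₁ hy₀ hy₁
  have hx₀p : 0 < x 0 - v 0 := by linarith [hx₀.1]
  set m := (x 1 - v 1) / (x 0 - v 0) with hm
  have hm0 : 0 ≤ m := div_nonneg hx₁.1 hx₀p.le
  have hm1 : m ≤ 1 := (div_le_one hx₀p).2 (by linarith [hx₀.1, hx₁.2])
  refine le_trans ?_ (volume_sheared_arcs_le hm0 hm1 hs hs8)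
  set T := {z : ℝ × ℝ | z.1 ∈ Icc (-(4 * s)) (4 * s) ∧
      1 - 4 * s ^ 2 ≤ (z.1 - m * z.2) ^ 2 + z.2 ^ 2 ∧ (z.1 - m * z.2) ^ 2 + z.2 ^ 2 ≤ 1}
    with hTdef
  have h₁ : MeasurableSet {z : ℝ × ℝ | 1 - 4 * s ^ 2 ≤ (z.1 - m * z.2) ^ 2 + z.2 ^ 2} :=
    measurableSet_le (by fun_prop) (by fun_prop)
  have h₂ : MeasurableSet {z : ℝ × ℝ | (z.1 - m * z.2) ^ 2 + z.2 ^ 2 ≤ 1} :=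
    measurableSet_le (by fun_prop) (by fun_prop)
  have hT : MeasurableSet T := (measurableSet_Icc.preimage measurable_fst).inter (h₁.inter h₂)
  have hsh : Measurable fun z : ℝ × ℝ => (z.1 - v 0 + m * (z.2 - v 1), z.2 - v 1) := by fun_prop
  have hT' : MeasurableSet {z : ℝ × ℝ | (z.1 - v 0 + m * (z.2 - v 1), z.2 - v 1) ∈ T} := hsh hT
  rw [← volume_preimage_shear hT m (v 0) (v 1), ← volume_plane_eq hT']
  refine measure_mono fun p hp => ?_
  obtain ⟨-, hpv, hpx, hpy⟩ := hp
  simp only at hpv hpx hpy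
  rw [← not_le, plane_dist_le_iff _ _ zero_le_one, not_le, one_pow] at hpx hpy
  rw [plane_dist_le_iff _ _ zero_le_one, one_pow] at hpv
  have hp' : (p 0 - v 0) ^ 2 + (p 1 - v 1) ^ 2 ≤ 1 := by linarith
  obtain ⟨ht, hr⟩ := uncovered_point_mem_arcs (p₀ := p 0 - v 0) (p₁ := p 1 - v 1) hs hs8 hx₀ hx₁
    hy₀ hy₁ hp' (by linarith) (by linarith)
  refine ⟨ht, ?_, ?_⟩
  · simpa using hr
  · simpa using hp'

theorem dist_le_of_mem_oppositePairs {v : Plane} {s : ℝ} (hs : 0 < s) (hs8 : s ≤ 1 / 8)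
    {x y : Plane} (h : (x, y) ∈ oppositePairs v s) : dist x v ≤ 2 * s ∧ dist y v ≤ 2 * s := by
  obtain ⟨⟨⟨hx₀, hx₀'⟩, hx₁, hx₁'⟩, ⟨hy₀, hy₀'⟩, hy₁⟩ := h
  simp only at hx₀ hx₀' hx₁ hx₁' hy₀ hy₀' hy₁
  have hx₀p : 0 < x 0 - v 0 := by linarith
  obtain ⟨hel, heu⟩ := (abs_le_mul_iff_mem_Icc hx₀p).1 hy₁
  have hm0 : 0 ≤ (x 1 - v 1) / (x 0 - v 0) := div_nonneg hx₁ hx₀p.le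
  have hm1 : (x 1 - v 1) / (x 0 - v 0) ≤ 1 := (div_le_one hx₀p).2 (by linarith)
  have hy₁b : |y 1 - v 1| ≤ 5 / 4 * s := by
    rw [abs_le]; constructor <;> nlinarith
  have := sq_le_sq' (abs_le.1 hy₁b).1 (abs_le.1 hy₁b).2
  rw [plane_dist_le_iff _ _ (by positivity), plane_dist_le_iff _ _ (by positivity)]
  constructor <;> nlinarith

end Geometry

section Pruning

theorem exists_uncovered_of_not_pruned {n : ℕ} {ω : Fin n → Plane} {i j k : Fin n} (hj : i < j)
    (hk : i < k) (hjk : j ≠ k) (hij : dist (ω i) (ω j) ≤ 1) (hik : dist (ω i) (ω k) ≤ 1)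
    (hd : dist (ω j) (ω k) ≤ 1) (h : ¬ Pruned ω i) :
    ∃ l, l ≠ i ∧ l ≠ j ∧ l ≠ k ∧ dist (ω i) (ω l) ≤ 1 ∧ 1 < dist (ω j) (ω l) ∧
      1 < dist (ω k) (ω l) := by
  wlog hlt : j < k generalizing j k
  · obtain ⟨l, h₁, h₂, h₃, h₄, h₅, h₆⟩ := this hk hj hjk.symm hik hij (by rwa [dist_comm])
      (lt_of_le_of_ne (not_lt.1 hlt) hjk.symm)
    exact ⟨l, h₁, h₃, h₂, h₄, h₆, h₅⟩
  have hsub : ¬ nbhd ω i ⊆ nbhd ω k ∪ nbhd ω j := fun hsub =>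
    h ⟨k, j, hj, hlt, Or.inr ⟨hk.ne', hik⟩, Or.inr ⟨hj.ne', hij⟩, by rwa [dist_comm], hsub⟩
  obtain ⟨l, hl, hlu⟩ := not_subset.1 hsub
  have hlk : l ∉ nbhd ω k := fun h => hlu (Or.inl h)
  have hlj : l ∉ nbhd ω j := fun h => hlu (Or.inr h)
  have hlnk : l ≠ k := fun h => hlk (Or.inl h)
  have hlnj : l ≠ j := fun h => hlj (Or.inl h)
  have hdk : 1 < dist (ω k) (ω l) := not_le.1 fun h => hlk (Or.inr ⟨hlnk, h⟩)
  have hdj : 1 < dist (ω j) (ω l) := not_le.1 fun h => hlj (Or.inr ⟨hlnj, h⟩)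
  have hli : l ≠ i := by
    rintro rfl
    exact absurd hdj (not_lt.2 (by rwa [dist_comm]))
  exact ⟨l, hli, hlnj, hlnk, (hl.resolve_left hli).2, hdj, hdk⟩

theorem rightBox_subset_closedBall (v : Plane) {s : ℝ} (hs : 0 < s) :
    rightBox v s ⊆ Metric.closedBall v (2 * s) := by
  rintro x ⟨⟨hx₀, hx₀'⟩, hx₁, hx₁'⟩
  rw [Metric.mem_closedBall, plane_dist_le_iff _ _ (by positivity)]
  nlinarith

theorem exists_disjoint_subsets_card {ι : Type*} [DecidableEq ι] {H : Finset ι} {m : ℕ}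
    (hm : 2 * m ≤ H.card) :
    ∃ G₁ G₂ : Finset ι, G₁ ⊆ H ∧ G₂ ⊆ H ∧ Disjoint G₁ G₂ ∧ G₁.card = m ∧ G₂.card = m := by
  obtain ⟨G₁, h₁, hc₁⟩ := Finset.exists_subset_card_eq (s := H) (n := m) (by omega)
  obtain ⟨G₂, h₂, hc₂⟩ := Finset.exists_subset_card_eq (s := H \ G₁) (n := m)
    (by rw [Finset.card_sdiff_of_subset h₁]; omega)
  exact ⟨G₁, G₂, h₁, h₂.trans Finset.sdiff_subset,
    (Finset.disjoint_sdiff).mono_right h₂, hc₁, hc₂⟩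

theorem measure_not_pruned_le {n : ℕ} {ℓ r s : ℝ} (hℓ : 0 < ℓ) (hs : 0 < s) (hs8 : s ≤ 1 / 8)
    (hsr : 2 * s ≤ r) (i : Fin n) {v : Plane} (hv : Metric.closedBall v r ⊆ square ℓ) {m : ℕ}
    (hm : 0 < m) (hmi : 2 * m ≤ n - 1 - i) :
    gMeasure n ℓ {ω | ¬ Pruned (Function.update ω i v) i} ≤
      ENNReal.ofReal (4 * (3 / (m * (s ^ 2 / 4 / ℓ ^ 2)) +
        1 / (m ^ 2 * (s ^ 2 / 4 / ℓ ^ 2 * (s ^ 3 / 4 / ℓ ^ 2)))) +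
        2 * n * (128 * s ^ 3 / ℓ ^ 2)) := by
  have := isProbabilityMeasure_unifSq hℓ
  have hball : Metric.closedBall v (2 * s) ⊆ square ℓ :=
    (Metric.closedBall_subset_closedBall hsr).trans hv
  obtain ⟨G₁, G₂, hG₁, hG₂, hG, hc₁, hc₂⟩ :=
    exists_disjoint_subsets_card (H := Finset.Ioi i) (m := m) (by rwa [Fin.card_Ioi])
  have hmeas := measure_all_pairs_blocked_le (P := unifSq ℓ) (S := oppositePairs v s)
    (R := rightBox v s) (T := uncoveredTriples v s) (a := s ^ 2 / 4 / ℓ ^ 2)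
    (q := s ^ 3 / 4 / ℓ ^ 2) (u := 128 * s ^ 3 / ℓ ^ 2) (by positivity) (by positivity)
    (by positivity) (measurableSet_oppositePairs v s) (measurableSet_rightBox v s)
    (unifSq_eq_of_subset hℓ (measurableSet_rightBox v s)
      ((rightBox_subset_closedBall v hs).trans hball) (volume_rightBox v hs.le))
    (fun x y h => h.1)
    (fun x hx => unifSq_eq_of_subset hℓ
      ((measurableSet_oppositePairs v s).preimage measurable_prodMk_left)
      (fun y hy => hball (dist_le_of_mem_oppositePairs hs hs8 hy).2)
      (volume_oppositePairs_snd v hs hx))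
    (fun y => (unifSq_le hℓ ((measurableSet_oppositePairs v s).preimage measurable_prodMk_right)
      (volume_oppositePairs_fst v hs y)).trans_eq (by congr 1; ring))
    (measurableSet_uncoveredTriples v s) (fun z w h => h.1)
    (fun z hz => unifSq_le hℓ
      ((measurableSet_uncoveredTriples v s).preimage measurable_prodMk_left)
      (volume_uncovered_le_s11 v hs hs8 hz))
    hG hm hc₁ hc₂
  rw [Fintype.card_fin] at hmeas
  refine (measure_mono fun ω hω j hj k hk hjk => ?_).trans hmeas
  have hij : i < j := Finset.mem_Ioi.1 (hG₁ hj)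
  have hik : i < k := Finset.mem_Ioi.1 (hG₂ hk)
  obtain ⟨hdj, hdk⟩ := dist_le_of_mem_oppositePairs hs hs8 hjk
  have hdjk : dist (ω j) (ω k) ≤ 1 := by linarith [dist_triangle_right (ω j) (ω k) v]
  obtain ⟨l, hli, hlj, hlk, h₁, h₂, h₃⟩ := exists_uncovered_of_not_pruned
    (ω := Function.update ω i v) hij hik
    (fun h => Finset.disjoint_left.1 hG hj (h ▸ hk))
    (by simp only [Function.update_self, Function.update_of_ne hij.ne']
        rw [dist_comm]; linarith)
    (by simp only [Function.update_self, Function.update_of_ne hik.ne']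
        rw [dist_comm]; linarith)
    (by simpa only [Function.update_of_ne hij.ne', Function.update_of_ne hik.ne'] using hdjk) hω
  simp only [Function.update_self, Function.update_of_ne hij.ne', Function.update_of_ne hik.ne',
    Function.update_of_ne hli] at h₁ h₂ h₃
  exact ⟨l, hlj, hlk, hjk, h₁, h₂, h₃⟩

end Pruning

section EventD

theorem quarter_le_volume_closedBall_inter_square {ℓ : ℝ} (hℓ : 1 ≤ ℓ) {v : Plane}
    (hv : v ∈ square ℓ) :
    ENNReal.ofReal (1 / 4) ≤ volume (Metric.closedBall v 1 ∩ square ℓ) := by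
  have key : ∀ t ∈ Icc 0 ℓ, ∃ c, 0 ≤ c ∧ c + 1 / 2 ≤ ℓ ∧ c ≤ t ∧ t ≤ c + 1 / 2 := by
    rintro t ⟨ht₀, ht₁⟩
    rcases le_total t (ℓ / 2) with h | h
    · exact ⟨t, ht₀, by linarith, le_rfl, by linarith⟩
    · exact ⟨t - 1 / 2, by linarith, by linarith, by linarith, by linarith⟩
  obtain ⟨a, ha₀, ha₁, ha₂, ha₃⟩ := key _ hv.1
  obtain ⟨b, hb₀, hb₁, hb₂, hb₃⟩ := key _ hv.2
  have h := volume_plane_eq (measurableSet_Icc.prod measurableSet_Icc :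
    MeasurableSet (Icc a (a + 1 / 2) ×ˢ Icc b (b + 1 / 2)))
  rw [Measure.volume_eq_prod, Measure.prod_prod, Real.volume_Icc, Real.volume_Icc,
    ← ENNReal.ofReal_mul (by linarith)] at h
  rw [show (1 / 4 : ℝ) = (a + 1 / 2 - a) * (b + 1 / 2 - b) by ring, ← h]
  refine measure_mono fun p hp => ?_
  obtain ⟨⟨h₁, h₂⟩, h₃, h₄⟩ := hp
  simp only at h₁ h₂ h₃ h₄
  refine ⟨?_, ⟨by linarith, by linarith⟩, by linarith, by linarith⟩
  rw [Metric.mem_closedBall, plane_dist_le_iff _ _ zero_le_one]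
  nlinarith

theorem toReal_hitCount {ι E : Type*} (G : Finset ι) (S : Set E) (ω : ι → E) :
    (hitCount G S ω).toReal = ({j | j ∈ G ∧ ω j ∈ S} : Set ι).ncard := by
  classical
  have h : ({j | j ∈ G ∧ ω j ∈ S} : Set ι) = (G.filter fun j => ω j ∈ S : Finset ι) := by
    ext; simp
  rw [h, Set.ncard_coe_finset, Finset.card_filter, hitCount, ENNReal.toReal_sum
    (fun j _ => by by_cases hj : ω j ∈ S <;> simp [hj]), Nat.cast_sum]
  refine Finset.sum_congr rfl fun j _ => ?_
  by_cases hj : ω j ∈ S <;> simp [hj]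

theorem measure_not_eventD_le {n : ℕ} {ℓ : ℝ} (hℓ : 1 ≤ ℓ) (i : Fin n) (hi : 0 < (i : ℕ))
    (hin : (i : ℕ) + 1 < n) {v : Plane} (hv : v ∈ square ℓ) :
    gMeasure n ℓ {ω | Function.update ω i v ∉ eventD n ℓ i} ≤
      ENNReal.ofReal (16 * ℓ ^ 2 / (n - (i + 1))) + ENNReal.ofReal (16 * ℓ ^ 2 / i) := by
  have hℓ0 : 0 < ℓ := by linarith
  have := isProbabilityMeasure_unifSq hℓ0
  set D := Metric.closedBall v 1 with hD
  have hDm : MeasurableSet D := Metric.isClosed_closedBall.measurableSet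
  have hfin : volume (D ∩ square ℓ) ≠ ∞ :=
    ((measure_mono inter_subset_right).trans_lt
      (by rw [volume_square hℓ0.le]; exact ENNReal.ofReal_lt_top)).ne
  set b := (volume (D ∩ square ℓ)).toReal / ℓ ^ 2 with hb
  have hbl : 1 / 4 / ℓ ^ 2 ≤ b := by
    rw [hb]
    gcongr
    exact (ENNReal.ofReal_le_iff_le_toReal hfin).1
      (quarter_le_volume_closedBall_inter_square hℓ hv)
  have hb0 : 0 < b := lt_of_lt_of_le (by positivity) hbl
  have hPD : unifSq ℓ D = ENNReal.ofReal b := by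
    rw [unifSq_apply hDm, volume_square hℓ0.le, hb, ENNReal.ofReal_div_of_pos (by positivity),
      ENNReal.ofReal_toReal hfin]
  have hbound : ∀ G : Finset (Fin n), G.Nonempty → gMeasure n ℓ
      {ω | G.card * b / 2 ≤ |(hitCount G D ω).toReal - G.card * b|} ≤
      ENNReal.ofReal (16 * ℓ ^ 2 / G.card) := by
    intro G hG
    refine (measure_hitCount_deviation (unifSq ℓ) G hDm hb0 hPD hG).trans ?_
    have hc : (0 : ℝ) < G.card := by exact_mod_cast hG.card_pos
    refine ENNReal.ofReal_le_ofReal ?_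
    rw [div_le_div_iff₀ (by positivity) hc]
    rw [div_le_iff₀ (by positivity)] at hbl
    nlinarith
  have hcb : ((Finset.Ioi i).card : ℝ) = n - (i + 1) := by
    rw [Fin.card_Ioi, Nat.sub_sub, Nat.cast_sub (by omega)]
    push_cast; ring
  have hcw : ((Finset.Iio i).card : ℝ) = i := by rw [Fin.card_Iio]
  have hb' := hbound (Finset.Ioi i) (Finset.card_pos.1 (by rw [Fin.card_Ioi]; omega))
  have hw' := hbound (Finset.Iio i) (Finset.card_pos.1 (by rw [Fin.card_Iio]; omega))
  rw [hcb] at hb'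
  rw [hcw] at hw'
  refine (measure_mono fun ω hω => ?_).trans ((measure_union_le _ _).trans (add_le_add hb' hw'))
  have hρb : (ρb n i (Function.update ω i v) : ℝ) = (hitCount (Finset.Ioi i) D ω).toReal := by
    rw [toReal_hitCount, ρb]
    congr 3
    ext j
    simp only [Finset.mem_Ioi, Function.update_self]
    refine and_congr_right fun hj => ?_
    rw [Function.update_of_ne hj.ne', hD, Metric.mem_closedBall]
  have hρw : (ρw n i (Function.update ω i v) : ℝ) = (hitCount (Finset.Iio i) D ω).toReal := by
    rw [toReal_hitCount, ρw]
    congr 3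
    ext j
    simp only [Finset.mem_Iio, Function.update_self]
    refine and_congr_right fun hj => ?_
    rw [Function.update_of_ne hj.ne, hD, Metric.mem_closedBall]
  have hμb : μb n ℓ i (Function.update ω i v) = (n - (i + 1)) * b := by
    simp only [μb, areaDhat, Function.update_self, hb, hD]; ring
  have hμw : μw n ℓ i (Function.update ω i v) = i * b := by
    simp only [μw, areaDhat, Function.update_self, hb, hD]; ring
  by_contra! hcon
  refine hω ⟨?_, ?_⟩
  · rw [hρb, hμb]
    exact not_le.1 fun h => hcon (Or.inl h)
  · rw [hρw, hμw]
    exact not_le.1 fun h => hcon (Or.inr h)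

end EventD

section Measurability

theorem measurableSet_pruned {n : ℕ} (i : Fin n) :
    MeasurableSet {ω : Fin n → Plane | Pruned ω i} := by
  have h : ∀ j k : Fin n, Measurable fun ω : Fin n → Plane => dist (ω j) (ω k) ≤ 1 := fun j k =>
    measurableSet_setOfPred.1 (measurableSet_le (by fun_prop) (by fun_prop))
  have hN : ∀ j k : Fin n, Measurable fun ω : Fin n → Plane => j ∈ nbhd ω k := fun j k =>
    measurable_const.or (measurable_const.and (h k j))
  refine measurableSet_setOfPred.2 (Measurable.exists fun j => Measurable.exists fun k => ?_)
  refine measurable_const.and (measurable_const.and ((hN j i).and ((hN k i).and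
    ((h j k).and ?_))))
  exact Measurable.forall fun l => (hN l i).imp ((hN l j).or (hN l k))

theorem measurable_ncard_setOf {n : ℕ} {p : Fin n → (Fin n → Plane) → Prop}
    (hp : ∀ j, Measurable (p j)) :
    Measurable fun ω => (({j | p j ω} : Set (Fin n)).ncard : ℝ) := by
  classical
  have h : (fun ω => (({j | p j ω} : Set (Fin n)).ncard : ℝ)) =
      fun ω => ∑ j, {ω | p j ω}.indicator (1 : (Fin n → Plane) → ℝ) ω := by
    ext ω
    have h' : ({j | p j ω} : Set (Fin n)) = (Finset.univ.filter fun j => p j ω : Finset _) := by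
      ext; simp
    rw [h', Set.ncard_coe_finset, Finset.card_filter, Nat.cast_sum]
    simp [indicator_apply]
  rw [h]
  exact Finset.measurable_sum _ fun j _ => measurable_one.indicator (measurableSet_setOfPred.2 (hp j))

theorem measurable_areaDhat {n : ℕ} (ℓ : ℝ) (i : Fin n) : Measurable (areaDhat ℓ i) := by
  have hd : MeasurableSet {p : Plane × Plane | dist p.2 p.1 ≤ 1} :=
    measurableSet_le (by fun_prop) (by fun_prop)
  have h := measurable_measure_prodMk_left (ν := (volume : Measure Plane))
    (hd.inter ((isClosed_square ℓ).measurableSet.preimage measurable_snd))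
  exact (h.comp (measurable_pi_apply i)).ennreal_toReal

theorem measurableSet_eventD (n : ℕ) (ℓ : ℝ) (i : Fin n) : MeasurableSet (eventD n ℓ i) := by
  have h : ∀ j k : Fin n, Measurable fun ω : Fin n → Plane => dist (ω j) (ω k) ≤ 1 := fun j k =>
    measurableSet_setOfPred.1 (measurableSet_le (by fun_prop) (by fun_prop))
  have hb : Measurable fun ω => (ρb n i ω : ℝ) :=
    measurable_ncard_setOf fun j => measurable_const.and (h j i)
  have hw : Measurable fun ω => (ρw n i ω : ℝ) :=
    measurable_ncard_setOf fun j => measurable_const.and (h j i)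
  have hA := measurable_areaDhat ℓ i
  have hμb : Measurable (μb n ℓ i) := (hA.const_mul _).div_const _
  have hμw : Measurable (μw n ℓ i) := (hA.const_mul _).div_const _
  exact (measurableSet_lt (hb.sub hμb).abs (hμb.div_const 2)).inter
    (measurableSet_lt (hw.sub hμw).abs (hμw.div_const 2))

theorem measurableSet_closedBall_subset_square (ℓ r : ℝ) :
    MeasurableSet {v : Plane | Metric.closedBall v r ⊆ square ℓ} := by
  have h : {v : Plane | Metric.closedBall v r ⊆ square ℓ} =
      ⋂ w ∈ Metric.closedBall (0 : Plane) r, (fun v => v + w) ⁻¹' square ℓ := by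
    ext v
    simp only [mem_ofPred_eq, mem_iInter, mem_preimage]
    constructor
    · intro h w hw
      exact h (by simpa using hw)
    · intro h p hp
      have := h (p - v) (by simpa [dist_eq_norm] using hp)
      simpa using this
  rw [h]
  exact (isClosed_biInter fun w _ => (isClosed_square ℓ).preimage (by fun_prop)).measurableSet

end Measurability

section Conditioning

theorem measure_pi_inter_eval_le {ι E : Type*} [Fintype ι] [DecidableEq ι] [MeasurableSpace E]
    {P : Measure E} [IsProbabilityMeasure P] (i : ι) {A₀ : Set E} (hA₀ : MeasurableSet A₀)
    {B : Set (ι → E)} (hB : MeasurableSet B) {c : ℝ≥0∞}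
    (h : ∀ v ∈ A₀, (Measure.pi fun _ : ι => P) {ω | Function.update ω i v ∈ B} ≤ c) :
    (Measure.pi fun _ : ι => P) (Function.eval i ⁻¹' A₀ ∩ B) ≤ c * P A₀ := by
  rw [measure_pi_eq_lintegral_update P i ((hA₀.preimage (measurable_pi_apply i)).inter hB),
    ← lintegral_indicator_const hA₀]
  refine lintegral_mono fun v => ?_
  by_cases hv : v ∈ A₀
  · rw [indicator_of_mem hv]
    exact (measure_mono fun ω hω => hω.2).trans (h v hv)
  · have : {ω : ι → E | Function.update ω i v ∈ Function.eval i ⁻¹' A₀ ∩ B} = ∅ := by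
      ext ω
      simp [hv]
    rw [this, measure_empty]
    exact zero_le

theorem ofReal_one_sub_le_cond {Ω : Type*} [MeasurableSpace Ω] {μ : Measure Ω}
    [IsProbabilityMeasure μ] {A D E : Set Ω} (hA : MeasurableSet A) (hD : MeasurableSet D)
    (hE : MeasurableSet E) (hA0 : μ A ≠ 0) (hAD : μ (A ∩ Dᶜ) ≤ 2⁻¹ * μ A) {ε : ℝ} (hε : 0 ≤ ε)
    (hAE : μ (A ∩ Eᶜ) ≤ ENNReal.ofReal ε * μ A) :
    ENNReal.ofReal (1 - 2 * ε) ≤ ProbabilityTheory.cond μ (D ∩ A) E := by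
  have hμA : μ A ≤ 2 * μ (D ∩ A) := by
    have h1 : 2⁻¹ * μ A + 2⁻¹ * μ A ≤ μ (D ∩ A) + 2⁻¹ * μ A := by
      rw [← add_mul, ENNReal.inv_two_add_inv_two, one_mul, inter_comm D A]
      calc μ A = μ (A ∩ D) + μ (A \ D) := (measure_inter_add_sdiff A hD).symm
        _ ≤ _ := by rw [sdiff_eq]; gcongr
    have h2 := ENNReal.le_of_add_le_add_right
      (ENNReal.mul_ne_top (by simp) (measure_ne_top μ A)) h1
    rwa [mul_comm, ← div_eq_mul_inv, ENNReal.div_le_iff (by simp) (by simp), mul_comm] at h2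
  have hs0 : μ (D ∩ A) ≠ 0 := fun h => hA0 (by simpa [h] using hμA)
  have := ProbabilityTheory.cond_isProbabilityMeasure hs0
  have hc : ProbabilityTheory.cond μ (D ∩ A) Eᶜ ≤ ENNReal.ofReal (2 * ε) := by
    rw [ProbabilityTheory.cond_apply (hD.inter hA), ← ENNReal.div_eq_inv_mul]
    refine ENNReal.div_le_of_le_mul ?_
    calc μ (D ∩ A ∩ Eᶜ) ≤ μ (A ∩ Eᶜ) := measure_mono (by gcongr; exact inter_subset_right)
      _ ≤ ENNReal.ofReal ε * (2 * μ (D ∩ A)) := hAE.trans (by gcongr)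
      _ = ENNReal.ofReal (2 * ε) * μ (D ∩ A) := by
        rw [ENNReal.ofReal_mul (by norm_num), ENNReal.ofReal_ofNat]; ring
  rw [ENNReal.ofReal_sub _ (by positivity), ENNReal.ofReal_one, tsub_le_iff_right,
    ← prob_add_prob_compl (μ := ProbabilityTheory.cond μ (D ∩ A)) hE]
  gcongr

theorem unifSq_closedBall_subset_square_ne_zero {ℓ r : ℝ} (hℓ : 4 ≤ ℓ) (hr : r ≤ 1) :
    unifSq ℓ {v : Plane | Metric.closedBall v r ⊆ square ℓ} ≠ 0 := by
  set c : Plane := !₂[ℓ / 2, ℓ / 2]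
  have hball : Metric.closedBall c 2 ⊆ square ℓ := by
    intro p hp
    rw [Metric.mem_closedBall, plane_dist_le_iff _ _ zero_le_two] at hp
    replace hp : (p 0 - ℓ / 2) ^ 2 + (p 1 - ℓ / 2) ^ 2 ≤ 2 ^ 2 := hp
    have h₀ := abs_le.1 (abs_le_of_sq_le_sq (by nlinarith [sq_nonneg (p 1 - ℓ / 2)] :
      (p 0 - ℓ / 2) ^ 2 ≤ 2 ^ 2) zero_le_two)
    have h₁ := abs_le.1 (abs_le_of_sq_le_sq (by nlinarith [sq_nonneg (p 0 - ℓ / 2)] :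
      (p 1 - ℓ / 2) ^ 2 ≤ 2 ^ 2) zero_le_two)
    exact ⟨⟨by linarith [h₀.1], by linarith [h₀.2]⟩, by linarith [h₁.1], by linarith [h₁.2]⟩
  have hsub : Metric.closedBall c 1 ⊆
      {v : Plane | Metric.closedBall v r ⊆ square ℓ} ∩ square ℓ := fun v hv =>
    ⟨(Metric.closedBall_subset_closedBall' (by
      linarith [Metric.mem_closedBall.1 hv])).trans hball,
      hball (Metric.closedBall_subset_closedBall one_le_two hv)⟩
  rw [unifSq_apply (measurableSet_closedBall_subset_square ℓ r)]
  refine (ENNReal.div_pos ?_ ?_).ne'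
  · exact ((Metric.measure_closedBall_pos volume c one_pos).trans_le (measure_mono hsub)).ne'
  · rw [volume_square (by linarith)]
    exact ENNReal.ofReal_ne_top

theorem ofReal_one_sub_le_cond_pruned {n : ℕ} {ℓ r ε : ℝ} (hℓ : 4 ≤ ℓ) (hr : r ≤ 1)
    (hε : 0 ≤ ε) (i : Fin n)
    (hD : ∀ v, Metric.closedBall v r ⊆ square ℓ →
      gMeasure n ℓ {ω | Function.update ω i v ∉ eventD n ℓ i} ≤ 2⁻¹)
    (hP : ∀ v, Metric.closedBall v r ⊆ square ℓ →
      gMeasure n ℓ {ω | ¬ Pruned (Function.update ω i v) i} ≤ ENNReal.ofReal ε) :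
    ENNReal.ofReal (1 - 2 * ε) ≤ ProbabilityTheory.cond (gMeasure n ℓ)
      (eventD n ℓ i ∩ eventA n ℓ r i) {ω | Pruned ω i} := by
  have := isProbabilityMeasure_unifSq (by linarith : 0 < ℓ)
  have : IsProbabilityMeasure (gMeasure n ℓ) := by unfold gMeasure; infer_instance
  have hA₀ := measurableSet_closedBall_subset_square ℓ r
  have hA : gMeasure n ℓ (eventA n ℓ r i) =
      unifSq ℓ {v : Plane | Metric.closedBall v r ⊆ square ℓ} :=
    (measurePreserving_eval (fun _ : Fin n => unifSq ℓ) i).measure_preimage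
      hA₀.nullMeasurableSet
  have hAm : MeasurableSet (eventA n ℓ r i) := hA₀.preimage (measurable_pi_apply i)
  refine ofReal_one_sub_le_cond hAm
    (measurableSet_eventD n ℓ i) (measurableSet_pruned i) ?_ ?_ hε ?_
  · rw [hA]
    exact unifSq_closedBall_subset_square_ne_zero hℓ hr
  · rw [hA]
    exact measure_pi_inter_eval_le i hA₀ (measurableSet_eventD n ℓ i).compl hD
  · rw [hA]
    exact measure_pi_inter_eval_le i hA₀ (measurableSet_pruned i).compl hP

end Conditioning

theorem blocked_bound_le {t y ℓ α : ℝ} {n m : ℕ} (ht : 2 ≤ t) (hy : 1 ≤ y) (hyt : y ^ 2 ≤ t)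
    (hℓ : 0 < ℓ) (hα : α = t ^ 8 * ℓ ^ 2) (hm : α / 4 ≤ m) (hn : 16 * n ≤ α * y) :
    4 * (3 / (m * ((1 / t ^ 3) ^ 2 / 4 / ℓ ^ 2)) +
        1 / (m ^ 2 * ((1 / t ^ 3) ^ 2 / 4 / ℓ ^ 2 * ((1 / t ^ 3) ^ 3 / 4 / ℓ ^ 2)))) +
      2 * n * (128 * (1 / t ^ 3) ^ 3 / ℓ ^ 2) ≤ 1232 / y := by
  have ht0 : 0 < t := by linarith
  have hα0 : 0 < α := by rw [hα]; positivity
  have h₁ : 3 / (m * ((1 / t ^ 3) ^ 2 / 4 / ℓ ^ 2)) ≤ 48 / t ^ 2 := by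
    calc _ ≤ 3 / (α / 4 * ((1 / t ^ 3) ^ 2 / 4 / ℓ ^ 2)) := by gcongr
      _ = 48 / t ^ 2 := by rw [hα]; field_simp; norm_num
  have h₂ : 1 / (m ^ 2 * ((1 / t ^ 3) ^ 2 / 4 / ℓ ^ 2 * ((1 / t ^ 3) ^ 3 / 4 / ℓ ^ 2))) ≤
      256 / t := by
    calc _ ≤ 1 / ((α / 4) ^ 2 *
          ((1 / t ^ 3) ^ 2 / 4 / ℓ ^ 2 * ((1 / t ^ 3) ^ 3 / 4 / ℓ ^ 2))) := by gcongr
      _ = 256 / t := by rw [hα]; field_simp; norm_num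
  have h₃ : 2 * n * (128 * (1 / t ^ 3) ^ 3 / ℓ ^ 2) ≤ 16 * y / t := by
    calc 2 * n * (128 * (1 / t ^ 3) ^ 3 / ℓ ^ 2)
        = 16 * n * (16 * (1 / t ^ 3) ^ 3 / ℓ ^ 2) := by ring
      _ ≤ α * y * (16 * (1 / t ^ 3) ^ 3 / ℓ ^ 2) := by gcongr
      _ = 16 * y / t := by rw [hα]; field_simp
  have h₄ : 48 / t ^ 2 ≤ 48 * y / t := by
    rw [div_le_div_iff₀ (by positivity) ht0]
    nlinarith [mul_nonneg (mul_nonneg ht0.le ht0.le) (sub_nonneg.2 hy)]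
  have h₅ : 256 / t ≤ 256 * y / t := by gcongr; linarith
  have h₆ : 1232 * y / t ≤ 1232 / y := by
    rw [div_le_div_iff₀ ht0 (by linarith)]
    linarith
  calc _ ≤ 4 * (48 * y / t + 256 * y / t) + 16 * y / t := by linarith
    _ = 1232 * y / t := by ring
    _ ≤ _ := h₆

theorem ofReal_one_sub_le_cond_pruned_of_large {n : ℕ} {ℓ α t y : ℝ} (hℓ : 4 ≤ ℓ) (ht : 2 ≤ t)
    (hy : 1 ≤ y) (hyt : y ^ 2 ≤ t) (hα : α = t ^ 8 * ℓ ^ 2) (hn : 16 * n ≤ α * y) (i : Fin n)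
    (hi : α ≤ (i : ℕ) + 1) (hin : ((i : ℕ) : ℝ) + 1 < n - α) :
    ENNReal.ofReal (1 - 2464 / y) ≤ ProbabilityTheory.cond (gMeasure n ℓ)
      (eventD n ℓ i ∩ eventA n ℓ (1 / y) i) {ω | Pruned ω i} := by
  have hα2 : 256 * ℓ ^ 2 ≤ α := by
    rw [hα]
    gcongr
    calc (256 : ℝ) = 2 ^ 8 := by norm_num
      _ ≤ t ^ 8 := by gcongr
  have hα4 : 4 ≤ α := by nlinarith
  have hi0 : α / 2 ≤ (i : ℕ) := by linarith
  have hipos : 0 < (i : ℕ) := by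
    have : (0 : ℝ) < (i : ℕ) := by linarith
    exact_mod_cast this
  have hin' : (i : ℕ) + 1 < n := by
    have : ((i : ℕ) : ℝ) + 1 < n := by linarith
    exact_mod_cast this
  have hr : 1 / y ≤ 1 := (div_le_one (by linarith)).2 hy
  have hy0 : 0 < y := by linarith
  have hy2 : y ≤ t := by nlinarith
  have ht3 : 4 * t ≤ t ^ 3 := by
    calc 4 * t = 2 ^ 2 * t := by ring
      _ ≤ t ^ 2 * t := by gcongr
      _ = t ^ 3 := by ring
  rw [show 2464 / y = 2 * (1232 / y) by ring]
  refine ofReal_one_sub_le_cond_pruned hℓ hr (by positivity) i (fun v hv => ?_) fun v hv => ?_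
  · have hvs : v ∈ square ℓ := hv (Metric.mem_closedBall_self (by positivity))
    refine (measure_not_eventD_le (by linarith) i hipos hin' hvs).trans ?_
    have hq : ∀ x : ℝ, α / 2 ≤ x → ENNReal.ofReal (16 * ℓ ^ 2 / x) ≤ ENNReal.ofReal (1 / 4) := by
      intro x hx
      refine ENNReal.ofReal_le_ofReal ?_
      rw [div_le_div_iff₀ (by linarith) (by norm_num)]
      linarith
    refine (add_le_add (hq _ (by linarith)) (hq _ hi0)).trans (le_of_eq ?_)
    rw [← ENNReal.ofReal_add (by norm_num) (by norm_num),
      show (1 / 4 + 1 / 4 : ℝ) = 2⁻¹ by norm_num, ENNReal.ofReal_inv_of_pos (by norm_num), ENNReal.ofReal_ofNat]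
  · obtain ⟨m, hm⟩ : ∃ m : ℕ, m = (n - 1 - i) / 2 := ⟨_, rfl⟩
    have hm2 : n ≤ 2 * m + i + 2 := by omega
    have hm2' : (n : ℝ) ≤ 2 * m + (i : ℕ) + 2 := by exact_mod_cast hm2
    have hmα : α / 4 ≤ m := by linarith
    have hm0 : 0 < m := by
      have : (0 : ℝ) < m := by linarith
      exact_mod_cast this
    have hs8 : 1 / t ^ 3 ≤ 1 / 8 := by gcongr; linarith
    have hsr : 2 * (1 / t ^ 3) ≤ 1 / y := by
      rw [mul_one_div, div_le_div_iff₀ (by positivity) hy0]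
      linarith
    refine (measure_not_pruned_le (by linarith) (by positivity) hs8 hsr i hv hm0
      (by omega)).trans (ENNReal.ofReal_le_ofReal ?_)
    exact blocked_bound_le ht hy hyt (by linarith) hα hmα hn

/-- Under the stated conditions on `⟨ℓ_n⟩` and `⟨α_n⟩`, there are `c̃ > 0` and
`n₀` such that for all `n ≥ n₀` and all indices `i` with `α_n ≤ i < n − α_n` (1-based IDs), the
conditional probability that vertex `i` is pruned by Rule 2, given `D_i ∩ A_i`, is at least
`1 − c̃/(log ξ_n)^{3/2}`, where `ξ_n = α_n/ℓ_n²` and `r = 1/(log ξ_n)^{3/2}`. -/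
theorem pruned_conditional_probability (cbar : ℝ) (hcbar : 0 < cbar) (ℓ : ℕ → ℝ)
    (hmono : Monotone ℓ)
    (hℓ : ∀ n : ℕ, 1 < n → Real.log n ≤ ℓ n ∧ ℓ n ≤ cbar * Real.sqrt (n / Real.log n))
    (α : ℕ → ℝ) (hα : ∀ n, 0 < α n)
    (hlittleo : (fun n => α n) =o[Filter.atTop] fun n => (n : ℝ))
    (hξ : Filter.Tendsto (fun n => α n / ℓ n ^ 2) Filter.atTop Filter.atTop)
    (h16 : ∀ᶠ n : ℕ in Filter.atTop,
      16 * (n : ℝ) / (Real.log (α n / ℓ n ^ 2)) ^ (3/2 : ℝ) < α n) :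
    ∃ ctil > (0 : ℝ), ∃ n₀ : ℕ, ∀ n : ℕ, n₀ ≤ n → ∀ i : Fin n,
      α n ≤ ((i : ℕ) : ℝ) + 1 → ((i : ℕ) : ℝ) + 1 < (n : ℝ) - α n →
      ENNReal.ofReal (1 - ctil / (Real.log (α n / ℓ n ^ 2)) ^ (3/2 : ℝ)) ≤
        (ProbabilityTheory.cond (gMeasure n (ℓ n))
            (eventD n (ℓ n) i ∩
              eventA n (ℓ n) (1 / (Real.log (α n / ℓ n ^ 2)) ^ (3/2 : ℝ)) i))
          {ω | Pruned ω i} := by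
  have hlog : ∀ᶠ x : ℝ in Filter.atTop, Real.log x ^ (3 : ℝ) ≤ x ^ (1 / 8 : ℝ) := by
    filter_upwards [(isLittleO_log_rpow_rpow_atTop 3 (by norm_num : (0 : ℝ) < 1 / 8)).bound
      one_pos, Filter.eventually_ge_atTop 1] with x hx hx1
    have h0 : 0 ≤ Real.log x := Real.log_nonneg hx1
    rwa [Real.norm_of_nonneg (by positivity), Real.norm_of_nonneg (by positivity), one_mul] at hx
  have hlogn : ∀ᶠ n : ℕ in Filter.atTop, 4 ≤ Real.log n :=
    (Real.tendsto_log_atTop.comp tendsto_natCast_atTop_atTop).eventually_ge_atTop 4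
  obtain ⟨n₀, hn₀⟩ := Filter.eventually_atTop.1 ((((((hξ.eventually hlog).and
    (hξ.eventually_ge_atTop 256)).and hlogn).and h16).and (Filter.eventually_gt_atTop 1)))
  refine ⟨2464, by norm_num, n₀, fun n hn i hi hin => ?_⟩
  obtain ⟨⟨⟨⟨hL3, h256⟩, hlog4⟩, h16n⟩, hn1⟩ := hn₀ n hn
  have hℓ4 : 4 ≤ ℓ n := hlog4.trans (hℓ n hn1).1
  set ξ := α n / ℓ n ^ 2 with hξdef
  have hξ0 : 0 ≤ ξ := by linarith
  have hL1 : 1 ≤ Real.log ξ := by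
    rw [Real.le_log_iff_exp_le (by linarith)]
    linarith [Real.exp_one_lt_d9]
  have hy1 : 1 ≤ Real.log ξ ^ (3 / 2 : ℝ) := Real.one_le_rpow hL1 (by norm_num)
  have ht8 : (ξ ^ (1 / 8 : ℝ)) ^ 8 = ξ := by
    rw [← Real.rpow_mul_natCast hξ0]; norm_num
  have ht2 : 2 ≤ ξ ^ (1 / 8 : ℝ) := by
    refine le_of_pow_le_pow_left₀ (n := 8) (by norm_num) (by positivity) ?_
    rw [ht8]
    linarith
  refine ofReal_one_sub_le_cond_pruned_of_large hℓ4 ht2 hy1 ?_ ?_ ?_ i hi hin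
  · rw [← Real.rpow_mul_natCast (by linarith)]
    convert hL3 using 2
    norm_num
  · rw [ht8, hξdef, div_mul_cancel₀ _ (by positivity)]
  · exact ((div_lt_iff₀ (by linarith)).1 h16n).le
end
end
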